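/- arXiv:1902.02818 — 2 statements merged into one kernel-verified Lean document; each statement's English description precedes it below -/
import Mathlib

section
/- Let α ∈ (0,1) and L > 0. There exists a constant c > 0, depending only on α and L, such that for every absolutely continuous w : [0,L] → ℝ one has ∫₀ᴸ (∂^α w)(x) · w(x) dx ≥ c ( ∫₀ᴸ |w(x)|² dx + ∫₀ᴸ ∫₀ᴸ |w(x)−w(p)|²/|x−p|^{1+α} dp dx ), i.e. ∫₀ᴸ ∂^α w · w dx ≥ c ‖w‖²_{H^{α/2}(0,L)}; in particular ∫₀ᴸ (∂^α w)(x) · w(x) dx ≥ (L^{−α}/(2Γ(1−α))) ∫₀ᴸ |w(x)|² dx. -/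
/-!
The estimate follows from the energy identity

`2 Γ(1-α) ∫ ∂^α w · w = ∫ x^(-α) w² + ∫ (L-x)^(-α) w² + α ∫∫_{p<x} |w x - w p|² / (x-p)^(1+α)`.

To obtain it, split `w x = w p + (w x - w p)` inside `∫_0^x (x-p)^(-α) w'(p) dp · w x`. In the second
part `w'(p) (w x - w p)` is minus the `p`-derivative of `(w x - w p)²/2`, and moving this derivative
onto the kernel (`kernel_layer`) gives the Gagliardo integrand and the boundary term
`x^(-α) (w x - w 0)²/2`; with the explicit `w 0 x^(-α)` term of the derivative this becomes
`x^(-α) (w x² + w 0²)/2`. The first part is the fractional integral of `w' w = (w²/2)'`, whose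
integral over `(0, L)` (`conv_total`) plus `∫ x^(-α) w 0²/2` equals `1/2 ∫ t^(-α) w(L-t)² dt ≥ 0`.
All integrability, including that of the Gagliardo integrand, comes from the integrability of the
convolution of `t^(-α)` with an integrable function.

Since `x^(-α) ≥ L^(-α)` on `(0, L]`, dropping the nonnegative `(L-x)^(-α)` term gives both claims,
with `c = min (L^(-α)/2) (α/4) / Γ(1-α)`.
-/

open MeasureTheory Set Filter

/-- Riemann–Liouville fractional integral of order gamma on (0, L) (real-valued),
with the convention that the integral of order 0 is the identity. -/
noncomputable def fracIntR (γ : ℝ) (f : ℝ → ℝ) (x : ℝ) : ℝ :=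
  if γ = 0 then f x
  else (Real.Gamma γ)⁻¹ * ∫ p in (0:ℝ)..x, (x - p) ^ (γ - 1) * f p

/-! ### Primitives of integrable functions -/

/-- The derivative of `W²/2` is `g W` for a primitive `W` of an integrable `g`; as `W` has its
derivative only almost everywhere, absolute continuity of `W` replaces the usual chain rule. -/
lemma integral_mul_primitive {g W : ℝ → ℝ} {w₀ : ℝ} (hg : Integrable g)
    (hW : ∀ x, W x = w₀ + ∫ t in (0:ℝ)..x, g t) (a b : ℝ) :
    ∫ p in a..b, g p * W p = (W b ^ 2 - W a ^ 2) / 2 := by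
  have hd : ∀ᵐ x, HasDerivAt W (g x) x := by
    filter_upwards [LocallyIntegrable.ae_hasDerivAt_integral hg.locallyIntegrable] with x hx
    have := (hx 0).const_add w₀
    rwa [← funext hW] at this
  have hac : AbsolutelyContinuousOnInterval W a b := by
    have h1 := (hg.intervalIntegrable (a := a) (b := b)).absolutelyContinuousOnInterval_intervalIntegral
      (c := a) left_mem_uIcc
    have h2 : AbsolutelyContinuousOnInterval (fun _ : ℝ => W a) a b :=
      (LipschitzWith.const (W a)).lipschitzOnWith.absolutelyContinuousOnInterval
    have h3 := h2.fun_add h1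
    have e : W = fun x => W a + ∫ t in a..x, g t := by
      ext x
      rw [hW x, hW a, add_assoc, intervalIntegral.integral_add_adjacent_intervals] <;>
        exact hg.intervalIntegrable
    rw [e]; exact h3
  have h4 := hac.integral_deriv_mul_eq_sub hac
  have h5 : ∫ x in a..b, deriv W x * W x + W x * deriv W x = ∫ x in a..b, 2 * (g x * W x) := by
    apply intervalIntegral.integral_congr_ae
    filter_upwards [hd] with x hx _
    rw [hx.deriv]; ring
  rw [h5, intervalIntegral.integral_const_mul] at h4
  linarith

/-! ### Integration by parts against the singular kernel -/

lemma integral_rpow_sub {α x p : ℝ} (hα : α ∈ Ioo (0:ℝ) 1) (hp : p ∈ Ioo 0 x) :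
    IntegrableOn (fun s => (x - s) ^ (-1 - α)) (Ioc 0 p) ∧
    ∫ s in Ioc 0 p, (x - s) ^ (-1 - α) = ((x - p) ^ (-α) - x ^ (-α)) / α := by
  obtain ⟨hp0, hpx⟩ := hp
  have h0 : (0:ℝ) ∉ uIcc (x - p) x := by
    rw [uIcc_of_le (by linarith)]; intro h; linarith [h.1]
  constructor
  · rw [← intervalIntegrable_iff_integrableOn_Ioc_of_le hp0.le]
    refine ContinuousOn.intervalIntegrable (ContinuousOn.rpow_const (by fun_prop) ?_)
    intro s hs
    rw [uIcc_of_le hp0.le] at hs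
    left; linarith [hs.2]
  · rw [← intervalIntegral.integral_of_le hp0.le,
      intervalIntegral.integral_comp_sub_left (fun u => u ^ (-1 - α)), sub_zero,
      integral_rpow (Or.inr ⟨by linarith [hα.1], h0⟩)]
    rw [show -1 - α + 1 = -α by ring, div_neg, ← neg_div]
    ring

/-- Integration by parts against the singular kernel, with no boundary term to control at `p = x`:
write `(x-p)^(-α) = x^(-α) + α ∫_0^p (x-s)^(-1-α) ds` and apply Fubini on the triangle `s < p < x`.
Integrability of the new integrand is part of the conclusion. -/
lemma kernel_layer {α x : ℝ} {h : ℝ → ℝ} (hα : α ∈ Ioo (0:ℝ) 1)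
    (hh : IntegrableOn h (Ioo 0 x)) (hk : IntegrableOn (fun p => (x - p) ^ (-α) * h p) (Ioo 0 x)) :
    IntegrableOn (fun s => (x - s) ^ (-1 - α) * ∫ p in s..x, h p) (Ioo 0 x) ∧
    ∫ p in Ioo 0 x, (x - p) ^ (-α) * h p = x ^ (-α) * (∫ p in Ioo 0 x, h p) +
      α * ∫ s in Ioo 0 x, (x - s) ^ (-1 - α) * ∫ p in s..x, h p := by
  set μ := volume.restrict (Ioo (0:ℝ) x) with hμ
  have hα0 : α ≠ 0 := hα.1.ne'
  let H : ℝ × ℝ → ℝ := {z : ℝ × ℝ | z.1 < z.2}.indicator (fun z => (x - z.1) ^ (-1 - α) * h z.2)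
  have hmeas : AEStronglyMeasurable H (μ.prod μ) := by
    refine AEStronglyMeasurable.indicator ?_ (measurableSet_lt measurable_fst measurable_snd)
    refine AEStronglyMeasurable.mul ?_ hh.aestronglyMeasurable.comp_snd
    exact Measurable.aestronglyMeasurable (by fun_prop)
  have hslice : ∀ p, (fun s => H (s, p)) =
      (Iio p).indicator (fun s => (x - s) ^ (-1 - α) * h p) := by
    intro p; ext s; simp only [H, indicator, mem_ofPred_eq, mem_Iio]
  have hres : ∀ p ∈ Ioo 0 x, μ.restrict (Iio p) = volume.restrict (Ioo 0 p) := by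
    intro p hp
    rw [hμ, Measure.restrict_restrict measurableSet_Iio]
    congr 1; ext s; simp only [mem_inter_iff, mem_Iio, mem_Ioo]
    exact ⟨fun a => ⟨a.2.1, a.1⟩, fun a => ⟨a.2, a.1, a.2.trans hp.2⟩⟩
  have hint1 : ∀ p ∈ Ioo 0 x, Integrable (fun s => H (s, p)) μ := by
    intro p hp
    rw [hslice, integrable_indicator_iff measurableSet_Iio, IntegrableOn, hres p hp]
    exact (((integral_rpow_sub hα hp).1).mono_set Ioo_subset_Ioc_self).mul_const _
  have hval : ∀ p ∈ Ioo 0 x, ∫ s, H (s, p) ∂μ = ((x - p) ^ (-α) - x ^ (-α)) / α * h p := by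
    intro p hp
    rw [hslice, integral_indicator measurableSet_Iio, hres p hp, integral_mul_const,
      ← integral_Ioc_eq_integral_Ioo, (integral_rpow_sub hα hp).2]
  have hvaln : ∀ p ∈ Ioo 0 x, ∫ s, ‖H (s, p)‖ ∂μ = ‖((x - p) ^ (-α) - x ^ (-α)) / α * h p‖ := by
    intro p hp
    have e : (fun s => ‖H (s, p)‖) =
      (Iio p).indicator (fun s => ‖(x - s) ^ (-1 - α) * h p‖) := by
      ext s
      have := congrFun (hslice p) s
      rw [this, norm_indicator_eq_indicator_norm]
    have e2 : ∀ s ∈ Ioo 0 p, ‖(x - s) ^ (-1 - α) * h p‖ = (x - s) ^ (-1 - α) * ‖h p‖ := by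
      intro s hs
      rw [norm_mul, Real.norm_of_nonneg (Real.rpow_nonneg (by linarith [hs.2, hp.2]) _)]
    rw [e, integral_indicator measurableSet_Iio, hres p hp,
      setIntegral_congr_fun measurableSet_Ioo e2, integral_mul_const,
      ← integral_Ioc_eq_integral_Ioo, norm_mul, Real.norm_of_nonneg (r := (_ / α)),
      (integral_rpow_sub hα hp).2]
    rw [← (integral_rpow_sub hα hp).2]
    refine setIntegral_nonneg measurableSet_Ioc fun s hs => Real.rpow_nonneg ?_ _
    linarith [hs.2, hp.2]
  have hF : IntegrableOn (fun p => ((x - p) ^ (-α) - x ^ (-α)) / α * h p) (Ioo 0 x) := by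
    refine IntegrableOn.congr_fun ((hk.sub (hh.const_mul (x ^ (-α)))).const_mul α⁻¹)
      (fun p _ => ?_) measurableSet_Ioo
    simp only [Pi.sub_apply]; field_simp
  have hHint : Integrable H (μ.prod μ) := by
    rw [integrable_prod_iff' hmeas]
    refine ⟨(ae_restrict_mem measurableSet_Ioo).mono hint1, ?_⟩
    exact IntegrableOn.congr_fun hF.norm (fun p hp => (hvaln p hp).symm) measurableSet_Ioo
  have hright : ∀ s ∈ Ioo 0 x, ∫ p, H (s, p) ∂μ = (x - s) ^ (-1 - α) * ∫ p in s..x, h p := by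
    intro s hs
    have e : (fun p => H (s, p)) = (Ioi s).indicator (fun p => (x - s) ^ (-1 - α) * h p) := by
      ext p; simp only [H, indicator, mem_ofPred_eq, mem_Ioi]
    have e3 : μ.restrict (Ioi s) = volume.restrict (Ioo s x) := by
      rw [hμ, Measure.restrict_restrict measurableSet_Ioi]
      congr 1; ext p; simp only [mem_inter_iff, mem_Ioi, mem_Ioo]
      exact ⟨fun a => ⟨a.1, a.2.2⟩, fun a => ⟨a.1, hs.1.trans a.1, a.2⟩⟩
    rw [e, integral_indicator measurableSet_Ioi, e3, integral_const_mul,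
      intervalIntegral.integral_of_le hs.2.le, integral_Ioc_eq_integral_Ioo]
  constructor
  · exact IntegrableOn.congr_fun hHint.integral_prod_left hright measurableSet_Ioo
  · have h1 : ∫ s, ∫ p, H (s, p) ∂μ ∂μ = ∫ p, ∫ s, H (s, p) ∂μ ∂μ :=
      integral_integral_swap (f := fun s p => H (s, p)) hHint
    rw [setIntegral_congr_fun measurableSet_Ioo hright,
      setIntegral_congr_fun measurableSet_Ioo hval] at h1
    rw [h1, ← integral_const_mul, ← integral_const_mul,
      ← integral_add (hh.const_mul _) (hF.const_mul α)]
    refine setIntegral_congr_fun measurableSet_Ioo fun p _ => ?_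
    field_simp; ring

/-! ### The fractional integral as a convolution -/

/-- The convolution kernel `t^(-α)`, cut off to `(0, L]` so that it is integrable on `ℝ` and the
fractional integral becomes a convolution on the whole line. -/
noncomputable def powKer (α L : ℝ) : ℝ → ℝ := (Ioc 0 L).indicator fun t => t ^ (-α)

lemma integrable_powKer {α L : ℝ} (hα : α ∈ Ioo (0:ℝ) 1) (hL : 0 < L) : Integrable (powKer α L) := by
  rw [powKer, integrable_indicator_iff measurableSet_Ioc,
    ← intervalIntegrable_iff_integrableOn_Ioc_of_le hL.le]
  exact intervalIntegral.intervalIntegrable_rpow' (by linarith [hα.2])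

lemma mul_powKer_eq {α L x : ℝ} {φ : ℝ → ℝ} (hφ : ∀ p ∉ Ioc 0 L, φ p = 0) (hx : x ∈ Ioc 0 L) :
    (fun p => φ p * powKer α L (x - p)) = (Ioo 0 x).indicator fun p => (x - p) ^ (-α) * φ p := by
  ext p
  by_cases hp : p ∈ Ioo 0 x
  · have : x - p ∈ Ioc 0 L := ⟨by linarith [hp.2], by linarith [hp.1, hx.2]⟩
    rw [indicator_of_mem hp, powKer, indicator_of_mem this, mul_comm]
  · rw [indicator_of_notMem hp]
    by_cases h0 : 0 < p
    · have : x - p ∉ Ioc 0 L := fun h => hp ⟨h0, by linarith [h.1]⟩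
      rw [powKer, indicator_of_notMem this, mul_zero]
    · rw [hφ p (fun h => h0 h.1), zero_mul]

lemma conv_integrable {α L : ℝ} {φ : ℝ → ℝ} (hα : α ∈ Ioo (0:ℝ) 1) (hL : 0 < L)
    (hi : Integrable φ) (hφ : ∀ p ∉ Ioc 0 L, φ p = 0) :
    (∀ᵐ x ∂volume.restrict (Ioc 0 L), IntegrableOn (fun p => (x - p) ^ (-α) * φ p) (Ioo 0 x)) ∧
    IntegrableOn (fun x => ∫ p in Ioo 0 x, (x - p) ^ (-α) * φ p) (Ioc 0 L) := by
  have h : Integrable (fun z : ℝ × ℝ => φ z.2 * powKer α L (z.1 - z.2)) (volume.prod volume) :=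
    hi.convolution_integrand (ContinuousLinearMap.mul ℝ ℝ) (integrable_powKer hα hL)
  constructor
  · filter_upwards [ae_restrict_of_ae h.prod_right_ae, ae_restrict_mem measurableSet_Ioc]
      with x hx hxL
    rw [← integrable_indicator_iff measurableSet_Ioo, ← mul_powKer_eq hφ hxL]
    exact hx
  · refine IntegrableOn.congr_fun h.integral_prod_left.integrableOn (fun x hx => ?_)
      measurableSet_Ioc
    rw [← integral_indicator measurableSet_Ioo, ← mul_powKer_eq hφ hx]

/-- Substituting `t = x - p` before exchanging the integrals puts the singular weight outside,
so that the inner integral is that of `φ` alone. -/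
lemma conv_total {α L : ℝ} {φ : ℝ → ℝ} (hα : α ∈ Ioo (0:ℝ) 1) (hL : 0 < L)
    (hi : Integrable φ) (hφ : ∀ p ∉ Ioc 0 L, φ p = 0) :
    ∫ x in Ioc 0 L, ∫ p in Ioo 0 x, (x - p) ^ (-α) * φ p =
      ∫ t in Ioc 0 L, t ^ (-α) * ∫ p in (0:ℝ)..(L - t), φ p := by
  have h : Integrable (fun z : ℝ × ℝ => powKer α L z.2 * φ (z.1 - z.2)) (volume.prod volume) :=
    (integrable_powKer hα hL).convolution_integrand (ContinuousLinearMap.mul ℝ ℝ) hi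
  have h' : Integrable (fun z : ℝ × ℝ => powKer α L z.2 * φ (z.1 - z.2))
      ((volume.restrict (Ioc 0 L)).prod volume) := by
    have := h.integrableOn (s := Ioc 0 L ×ˢ univ)
    rwa [IntegrableOn, ← Measure.prod_restrict, Measure.restrict_univ] at this
  have hs := integral_integral_swap (f := fun x t => powKer α L t * φ (x - t)) h'
  have e1 : ∀ x ∈ Ioc 0 L, ∫ t, powKer α L t * φ (x - t) = ∫ p in Ioo 0 x, (x - p) ^ (-α) * φ p := by
    intro x hx
    rw [← integral_indicator measurableSet_Ioo, ← mul_powKer_eq hφ hx,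
      ← integral_sub_left_eq_self (fun p => φ p * powKer α L (x - p)) volume x]
    simp only [sub_sub_cancel, mul_comm]
  have e2 : (fun t => ∫ x in Ioc 0 L, powKer α L t * φ (x - t)) =
      (Ioc 0 L).indicator fun t => t ^ (-α) * ∫ p in (0:ℝ)..(L - t), φ p := by
    ext t
    rw [integral_const_mul]
    by_cases ht : t ∈ Ioc 0 L
    · rw [indicator_of_mem ht, powKer, indicator_of_mem ht, ← intervalIntegral.integral_of_le hL.le,
        intervalIntegral.integral_comp_sub_right (fun p => φ p),
        ← intervalIntegral.integral_add_adjacent_intervals (b := 0) hi.intervalIntegrable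
          hi.intervalIntegrable]
      have : ∫ p in (0 - t)..0, φ p = 0 := by
        rw [intervalIntegral.integral_of_le (by linarith [ht.1])]
        exact setIntegral_eq_zero_of_forall_eq_zero fun p hp => hφ p fun h => by
          linarith [h.1, hp.2]
      rw [this, zero_add]
    · rw [indicator_of_notMem ht, powKer, indicator_of_notMem ht, zero_mul]
  rw [setIntegral_congr_fun measurableSet_Ioc e1] at hs
  rw [hs, e2, integral_indicator measurableSet_Ioc]

/-! ### The Gagliardo double integral -/

/-- A symmetric integrand that vanishes on the diagonal integrates over the square to twice its
integral over the triangle `p < x`. -/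
lemma symm_integral {L : ℝ} {G : ℝ → ℝ → ℝ} (hm : Measurable (Function.uncurry G))
    (h0 : ∀ x p, 0 ≤ G x p) (hd : ∀ x, G x x = 0) (hs : ∀ x p, G x p = G p x)
    (h1 : ∀ᵐ x ∂volume.restrict (Ioc 0 L), IntegrableOn (G x) (Ioo 0 x))
    (h2 : IntegrableOn (fun x => ∫ p in Ioo 0 x, G x p) (Ioc 0 L)) :
    ∫ x in Ioc 0 L, ∫ p in Ioc 0 L, G x p = 2 * ∫ x in Ioc 0 L, ∫ p in Ioo 0 x, G x p := by
  set μ := volume.restrict (Ioc (0:ℝ) L) with hμ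
  let T : ℝ × ℝ → ℝ := {z : ℝ × ℝ | z.2 < z.1}.indicator (Function.uncurry G)
  have hT : Measurable T := hm.indicator (measurableSet_lt measurable_snd measurable_fst)
  have hT0 : ∀ z, 0 ≤ T z := fun z => indicator_nonneg (fun z _ => h0 z.1 z.2) z
  have hsl : ∀ x, (fun p => T (x, p)) = (Iio x).indicator (G x) := by
    intro x; ext p; simp only [T, indicator, mem_ofPred_eq, mem_Iio, Function.uncurry]
  have hres : ∀ x ∈ Ioc 0 L, μ.restrict (Iio x) = volume.restrict (Ioo 0 x) := by
    intro x hx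
    rw [hμ, Measure.restrict_restrict measurableSet_Iio]
    congr 1; ext s; simp only [mem_inter_iff, mem_Iio, mem_Ioo, mem_Ioc]
    exact ⟨fun a => ⟨a.2.1, a.1⟩, fun a => ⟨a.2, a.1, a.2.le.trans hx.2⟩⟩
  have hval : ∀ x ∈ Ioc 0 L, ∫ p, T (x, p) ∂μ = ∫ p in Ioo 0 x, G x p := by
    intro x hx
    rw [hsl, integral_indicator measurableSet_Iio, hres x hx]
  have hTi : Integrable T (μ.prod μ) := by
    rw [integrable_prod_iff hT.aestronglyMeasurable]
    constructor
    · filter_upwards [h1, ae_restrict_mem measurableSet_Ioc] with x hx hxL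
      rw [hsl, integrable_indicator_iff measurableSet_Iio, IntegrableOn, hres x hxL]
      exact hx
    · simp only [Real.norm_of_nonneg (hT0 _)]
      exact IntegrableOn.congr_fun h2 (fun x hx => (hval x hx).symm) measurableSet_Ioc
  have hG : ∀ x p, G x p = T (x, p) + (T ∘ Prod.swap) (x, p) := by
    intro x p
    simp only [T, indicator, mem_ofPred_eq, Function.uncurry, Function.comp, Prod.swap]
    rcases lt_trichotomy x p with h | h | h
    · simp [h, h.not_gt, hs x p]
    · simp [h, hd]
    · simp [h, h.not_gt]
  conv_lhs => simp only [hG]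
  rw [integral_integral_add hTi hTi.swap, ← integral_prod _ hTi.swap, ← integral_prod _ hTi]
  have : ∫ z, (T ∘ Prod.swap) z ∂μ.prod μ = ∫ z, T z ∂μ.prod μ := integral_prod_swap T
  rw [this, integral_prod _ hTi, two_mul, setIntegral_congr_fun measurableSet_Ioc hval]

lemma quot_eq {α x s a b : ℝ} (hs : s < x) :
    |a - b| ^ 2 / |x - s| ^ (1 + α) = (x - s) ^ (-1 - α) * (a - b) ^ 2 := by
  rw [sq_abs, abs_of_pos (sub_pos.2 hs), show -1 - α = -(1 + α) by ring,
    Real.rpow_neg (sub_pos.2 hs).le, div_eq_inv_mul]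

/-! ### The energy estimate -/

/-- The coercivity estimate for `Γ(1-α) ∂^α`, for a density `g` supported in `(0, L]` and its
primitive `W` on the whole line. -/
lemma energy {α L w₀ : ℝ} {g W : ℝ → ℝ} (hα : α ∈ Ioo (0:ℝ) 1) (hL : 0 < L)
    (hg : Integrable g) (hg0 : ∀ p ∉ Ioc 0 L, g p = 0)
    (hW : ∀ x, W x = w₀ + ∫ t in (0:ℝ)..x, g t) :
    L ^ (-α) / 2 * (∫ x in Ioc 0 L, W x ^ 2) + α / 4 *
      (∫ x in Ioc 0 L, ∫ p in Ioc 0 L, |W x - W p| ^ 2 / |x - p| ^ (1 + α)) ≤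
    ∫ x in Ioc 0 L, ((∫ p in Ioo 0 x, (x - p) ^ (-α) * g p) + w₀ * x ^ (-α)) * W x := by
  have hα0 : 0 < α := hα.1
  have hWc : Continuous W := by
    rw [funext hW]
    exact continuous_const.add (intervalIntegral.continuous_primitive
      (fun a b => hg.intervalIntegrable) 0)
  have hW0 : W 0 = w₀ := by simp [hW 0]
  have hbd : ∃ M, ∀ x ∈ Icc 0 L, ‖W x‖ ≤ M := isCompact_Icc.exists_bound_of_continuousOn hWc.continuousOn
  obtain ⟨M, hM⟩ := hbd
  have hgW : Integrable fun p => g p * W p := by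
    have hi : IntegrableOn (fun p => g p * W p) (Ioc 0 L) :=
      hg.integrableOn.mul_bdd (c := M) hWc.aestronglyMeasurable
      ((ae_restrict_mem measurableSet_Ioc).mono fun x hx => hM x ⟨hx.1.le, hx.2⟩)
    rw [← integrable_indicator_iff measurableSet_Ioc] at hi
    have e : (fun p => g p * W p) = (Ioc 0 L).indicator fun p => g p * W p := by
      ext p
      by_cases hp : p ∈ Ioc 0 L
      · rw [indicator_of_mem hp]
      · rw [indicator_of_notMem hp, hg0 p hp, zero_mul]
    rw [e]; exact hi
  have hgW0 : ∀ p ∉ Ioc 0 L, g p * W p = 0 := fun p hp => by rw [hg0 p hp, zero_mul]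
  obtain ⟨ha1, hi1⟩ := conv_integrable hα hL hg hg0
  obtain ⟨ha2, hi2⟩ := conv_integrable hα hL hgW hgW0
  have htot := conv_total hα hL hgW hgW0
  have hpow : IntegrableOn (fun x : ℝ => x ^ (-α)) (Ioc 0 L) := by
    rw [← intervalIntegrable_iff_integrableOn_Ioc_of_le hL.le]
    exact intervalIntegral.intervalIntegrable_rpow' (by linarith [hα.2])
  have hmulW : ∀ f : ℝ → ℝ, IntegrableOn f (Ioc 0 L) →
      IntegrableOn (fun x => f x * W x) (Ioc 0 L) := fun f hf =>
    Integrable.mul_bdd (c := M) hf hWc.aestronglyMeasurable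
      ((ae_restrict_mem measurableSet_Ioc).mono fun x hx => hM x ⟨hx.1.le, hx.2⟩)
  set C := fun x => ∫ p in Ioo 0 x, (x - p) ^ (-α) * g p with hC
  set D := fun x => ∫ p in Ioo 0 x, (x - p) ^ (-α) * (g p * W p) with hD
  set Q := fun x => ∫ p in Ioo 0 x, |W x - W p| ^ 2 / |x - p| ^ (1 + α) with hQ
  -- Splitting `W x = W p + (W x - W p)` inside the convolution; `(W x - W p)²/2` is the
  -- primitive in `p`, vanishing at `p = x`, of `-g p (W x - W p)`.
  have key : ∀ᵐ x ∂volume.restrict (Ioc 0 L),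
      IntegrableOn (fun p => |W x - W p| ^ 2 / |x - p| ^ (1 + α)) (Ioo 0 x) ∧
      C x * W x - D x = x ^ (-α) * ((W x - w₀) ^ 2 / 2) + α / 2 * Q x := by
    filter_upwards [ha1, ha2, ae_restrict_mem measurableSet_Ioc] with x h1 h2 hx
    have hh : Integrable fun p => g p * (W x - W p) := by
      refine ((hg.mul_const (W x)).sub hgW).congr (ae_of_all _ fun p => ?_)
      simp only [Pi.sub_apply]; ring
    have hprim : ∀ s, ∫ p in s..x, g p * (W x - W p) = (W x - W s) ^ 2 / 2 := by
      intro s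
      have e : ∀ p, g p * (W x - W p) = W x * g p - g p * W p := fun p => by ring
      simp only [e]
      rw [intervalIntegral.integral_sub (hg.intervalIntegrable.const_mul _) hgW.intervalIntegrable,
        intervalIntegral.integral_const_mul, integral_mul_primitive hg hW]
      have : ∫ p in s..x, g p = W x - W s := by
        rw [hW x, hW s, ← intervalIntegral.integral_interval_sub_left hg.intervalIntegrable
          hg.intervalIntegrable (a := 0)]
        ring
      rw [this]; ring
    have hk : IntegrableOn (fun p => (x - p) ^ (-α) * (g p * (W x - W p))) (Ioo 0 x) := by
      refine Integrable.congr ((h1.mul_const (W x)).sub h2) (ae_of_all _ fun p => ?_)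
      simp only [Pi.sub_apply]; ring
    obtain ⟨r1, r2⟩ := kernel_layer hα hh.integrableOn hk
    simp only [hprim] at r1 r2
    have eQ : ∀ p ∈ Ioo 0 x, |W x - W p| ^ 2 / |x - p| ^ (1 + α) =
        2 * ((x - p) ^ (-1 - α) * ((W x - W p) ^ 2 / 2)) := by
      intro p hp
      rw [quot_eq hp.2]; ring
    constructor
    · exact IntegrableOn.congr_fun (r1.const_mul 2) (fun p hp => (eQ p hp).symm) measurableSet_Ioo
    · have e1 : C x * W x - D x = ∫ p in Ioo 0 x, (x - p) ^ (-α) * (g p * (W x - W p)) := by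
        simp only [hC, hD]
        rw [← integral_mul_const, ← integral_sub (h1.mul_const _) h2]
        congr 1; ext p; ring
      have e2 : ∫ p in Ioo 0 x, g p * (W x - W p) = (W x - w₀) ^ 2 / 2 := by
        rw [← hW0, ← hprim 0, intervalIntegral.integral_of_le hx.1.le,
          integral_Ioc_eq_integral_Ioo]
      rw [e1, r2, e2]
      simp only [hQ]
      rw [setIntegral_congr_fun measurableSet_Ioo eQ, integral_const_mul]
      ring
  have hW2 : IntegrableOn (fun x => W x ^ 2) (Ioc 0 L) :=
    ((hWc.pow 2).integrableOn_Icc).mono_set Ioc_subset_Icc_self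
  have hA : IntegrableOn (fun x => x ^ (-α) * W x ^ 2) (Ioc 0 L) :=
    (hmulW _ (hmulW _ hpow)).congr (ae_of_all _ fun x => by ring)
  have hB : IntegrableOn (fun x => x ^ (-α) * (W x - w₀) ^ 2 / 2) (Ioc 0 L) := by
    refine Integrable.congr (((hA.sub ((hmulW _ hpow).const_mul (2 * w₀))).add
      (hpow.const_mul (w₀ ^ 2))).const_mul (1 / 2)) (ae_of_all _ fun x => ?_)
    simp only [Pi.sub_apply, Pi.add_apply]; ring
  have hQi : IntegrableOn Q (Ioc 0 L) := by
    refine Integrable.congr ((((hmulW _ hi1).sub hi2).sub hB).const_mul (2 / α))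
      (key.mono fun x hx => ?_)
    simp only [Pi.sub_apply]
    rw [hx.2]; field_simp; ring
  have hsym := symm_integral (L := L) (G := fun x p => |W x - W p| ^ 2 / |x - p| ^ (1 + α))
    (by have := hWc.measurable; unfold Function.uncurry; fun_prop)
    (fun x p => by positivity) (fun x => by simp)
    (fun x p => by rw [abs_sub_comm, abs_sub_comm x])
    (key.mono fun x hx => hx.1) hQi
  -- Uses `(W x - w₀)²/2 + w₀ W x = W x²/2 + w₀²/2`.
  have hE : ∫ x in Ioc 0 L, (C x + w₀ * x ^ (-α)) * W x =
      ((∫ x in Ioc 0 L, D x) + w₀ ^ 2 / 2 * ∫ x in Ioc 0 L, x ^ (-α)) +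
        1 / 2 * (∫ x in Ioc 0 L, x ^ (-α) * W x ^ 2) + α / 2 * ∫ x in Ioc 0 L, Q x := by
    have s1 : IntegrableOn (fun x => D x + w₀ ^ 2 / 2 * x ^ (-α)) (Ioc 0 L) :=
      Integrable.add hi2 (hpow.const_mul _)
    have s2 : IntegrableOn
        (fun x => D x + w₀ ^ 2 / 2 * x ^ (-α) + 1 / 2 * (x ^ (-α) * W x ^ 2)) (Ioc 0 L) :=
      Integrable.add s1 (hA.const_mul _)
    rw [← integral_const_mul, ← integral_const_mul, ← integral_const_mul,
      ← integral_add hi2 (hpow.const_mul _), ← integral_add s1 (hA.const_mul _),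
      ← integral_add s2 (hQi.const_mul _)]
    refine integral_congr_ae (key.mono fun x hx => ?_)
    simp only
    linear_combination hx.2
  -- This quantity equals `1/2 ∫ t^(-α) W(L-t)² dt`.
  have hpos : 0 ≤ (∫ x in Ioc 0 L, D x) + w₀ ^ 2 / 2 * ∫ x in Ioc 0 L, x ^ (-α) := by
    have hr : IntegrableOn (fun t : ℝ => t ^ (-α) * ∫ p in (0:ℝ)..(L - t), g p * W p) (Ioc 0 L) := by
      have hc : Continuous fun t : ℝ => ∫ p in (0:ℝ)..(L - t), g p * W p :=
        (intervalIntegral.continuous_primitive (fun a b => hgW.intervalIntegrable) 0).comp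
          (by fun_prop : Continuous fun t : ℝ => L - t)
      obtain ⟨K, hK⟩ := isCompact_Icc.exists_bound_of_continuousOn (s := Icc 0 L) hc.continuousOn
      exact Integrable.mul_bdd (c := K) hpow hc.aestronglyMeasurable
        ((ae_restrict_mem measurableSet_Ioc).mono fun x hx => hK x ⟨hx.1.le, hx.2⟩)
    rw [htot, ← integral_const_mul, ← integral_add hr (hpow.const_mul _)]
    refine setIntegral_nonneg measurableSet_Ioc fun t ht => ?_
    rw [integral_mul_primitive hg hW, hW0]
    have : t ^ (-α) * ((W (L - t) ^ 2 - w₀ ^ 2) / 2) + w₀ ^ 2 / 2 * t ^ (-α) =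
      t ^ (-α) * (W (L - t) ^ 2 / 2) := by ring
    rw [this]
    exact mul_nonneg (Real.rpow_nonneg ht.1.le _) (by positivity)
  have hlow : L ^ (-α) * (∫ x in Ioc 0 L, W x ^ 2) ≤ ∫ x in Ioc 0 L, x ^ (-α) * W x ^ 2 := by
    rw [← integral_const_mul]
    refine setIntegral_mono_on (hW2.const_mul _) hA measurableSet_Ioc fun x hx => ?_
    exact mul_le_mul_of_nonneg_right
      (Real.rpow_le_rpow_of_nonpos hx.1 hx.2 (by linarith)) (sq_nonneg _)
  rw [hE, hsym]
  linarith

/-- the coercivity estimate for the Riemann-Liouville derivative: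
the energy integral dominates a constant times the square of the H^{a/2}(0,L) norm,
and in particular a constant times the L2 norm squared. Here w is absolutely continuous
on [0, L] with integrable a.e. derivative w', and
(d^a w)(x) = (I^{1-a} w')(x) + w(0) x^{-a} / Gamma(1-a). -/
theorem statement_12 (α L : ℝ) (hα : α ∈ Set.Ioo (0:ℝ) 1) (hL : 0 < L) :
    ∃ c > (0:ℝ), ∀ w w' : ℝ → ℝ, IntervalIntegrable w' MeasureTheory.volume 0 L →
      (∀ x ∈ Set.Icc (0:ℝ) L, w x = w 0 + ∫ t in (0:ℝ)..x, w' t) →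
      c * ((∫ x in (0:ℝ)..L, |w x| ^ 2) +
            ∫ x in (0:ℝ)..L, ∫ p in (0:ℝ)..L, |w x - w p| ^ 2 / |x - p| ^ (1 + α)) ≤
          (∫ x in (0:ℝ)..L,
            (fracIntR (1 - α) w' x + w 0 * x ^ (-α) / Real.Gamma (1 - α)) * w x) ∧
      L ^ (-α) / (2 * Real.Gamma (1 - α)) * (∫ x in (0:ℝ)..L, |w x| ^ 2) ≤
        ∫ x in (0:ℝ)..L,
          (fracIntR (1 - α) w' x + w 0 * x ^ (-α) / Real.Gamma (1 - α)) * w x := by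
  have hα0 : 0 < α := hα.1
  have hΓ : 0 < Real.Gamma (1 - α) := Real.Gamma_pos_of_pos (by linarith [hα.2])
  have hLα : 0 < L ^ (-α) := Real.rpow_pos_of_pos hL _
  refine ⟨min (L ^ (-α) / 2) (α / 4) / Real.Gamma (1 - α), by positivity, ?_⟩
  intro w w' hw' hw
  set g := (Ioc 0 L).indicator w' with hgdef
  set W : ℝ → ℝ := fun x => w 0 + ∫ t in (0:ℝ)..x, g t with hWdef
  have hg : Integrable g := by
    rw [hgdef, integrable_indicator_iff measurableSet_Ioc]
    exact (intervalIntegrable_iff_integrableOn_Ioc_of_le hL.le).1 hw'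
  have hg0 : ∀ p ∉ Ioc 0 L, g p = 0 := fun p hp => indicator_of_notMem hp _
  have hWw : ∀ x ∈ Ioc 0 L, w x = W x := by
    intro x hx
    rw [hw x ⟨hx.1.le, hx.2⟩, hWdef]
    simp only
    rw [intervalIntegral.integral_of_le hx.1.le, intervalIntegral.integral_of_le hx.1.le]
    congr 1
    refine setIntegral_congr_fun measurableSet_Ioc fun t ht => ?_
    exact (indicator_of_mem (show t ∈ Ioc 0 L from ⟨ht.1, ht.2.trans hx.2⟩) _).symm
  have hen := energy hα hL hg hg0 (fun x => rfl : ∀ x, W x = w 0 + ∫ t in (0:ℝ)..x, g t)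
  have e1 : ∫ x in (0:ℝ)..L, |w x| ^ 2 = ∫ x in Ioc 0 L, W x ^ 2 := by
    rw [intervalIntegral.integral_of_le hL.le]
    refine setIntegral_congr_fun measurableSet_Ioc fun x hx => ?_
    rw [hWw x hx, sq_abs]
  have e2 : ∫ x in (0:ℝ)..L, ∫ p in (0:ℝ)..L, |w x - w p| ^ 2 / |x - p| ^ (1 + α) =
      ∫ x in Ioc 0 L, ∫ p in Ioc 0 L, |W x - W p| ^ 2 / |x - p| ^ (1 + α) := by
    rw [intervalIntegral.integral_of_le hL.le]
    refine setIntegral_congr_fun measurableSet_Ioc fun x hx => ?_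
    rw [intervalIntegral.integral_of_le hL.le]
    refine setIntegral_congr_fun measurableSet_Ioc fun p hp => ?_
    rw [hWw x hx, hWw p hp]
  have e3 : ∫ x in (0:ℝ)..L,
        (fracIntR (1 - α) w' x + w 0 * x ^ (-α) / Real.Gamma (1 - α)) * w x =
      (Real.Gamma (1 - α))⁻¹ * ∫ x in Ioc 0 L,
        ((∫ p in Ioo 0 x, (x - p) ^ (-α) * g p) + w 0 * x ^ (-α)) * W x := by
    rw [intervalIntegral.integral_of_le hL.le, ← integral_const_mul]
    refine setIntegral_congr_fun measurableSet_Ioc fun x hx => ?_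
    have e4 : ∫ p in (0:ℝ)..x, (x - p) ^ (1 - α - 1) * w' p =
        ∫ p in Ioo 0 x, (x - p) ^ (-α) * g p := by
      rw [intervalIntegral.integral_of_le hx.1.le, integral_Ioc_eq_integral_Ioo]
      refine setIntegral_congr_fun measurableSet_Ioo fun p hp => ?_
      have : g p = w' p := indicator_of_mem (show p ∈ Ioc 0 L from ⟨hp.1, hp.2.le.trans hx.2⟩) _
      rw [this, show 1 - α - 1 = -α by ring]
    simp only [fracIntR]
    rw [if_neg (by linarith [hα.2] : ¬ (1 - α = 0)), e4, hWw x hx]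
    ring
  rw [e1, e2, e3]
  set N := ∫ x in Ioc 0 L, W x ^ 2
  set S := ∫ x in Ioc 0 L, ∫ p in Ioc 0 L, |W x - W p| ^ 2 / |x - p| ^ (1 + α)
  have hN : 0 ≤ N := setIntegral_nonneg measurableSet_Ioc fun x _ => sq_nonneg _
  have hS : 0 ≤ S := setIntegral_nonneg measurableSet_Ioc fun x _ =>
    setIntegral_nonneg measurableSet_Ioc fun p _ => by positivity
  have hΓi : 0 ≤ (Real.Gamma (1 - α))⁻¹ := (inv_pos.2 hΓ).le
  constructor
  · rw [div_eq_inv_mul, mul_assoc]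
    refine mul_le_mul_of_nonneg_left (le_trans ?_ hen) hΓi
    rw [mul_add]
    exact add_le_add (mul_le_mul_of_nonneg_right (min_le_left _ _) hN)
      (mul_le_mul_of_nonneg_right (min_le_right _ _) hS)
  · have : L ^ (-α) / (2 * Real.Gamma (1 - α)) * N =
        (Real.Gamma (1 - α))⁻¹ * (L ^ (-α) / 2 * N) := by field_simp
    rw [this]
    refine mul_le_mul_of_nonneg_left (le_trans ?_ hen) hΓi
    have := mul_nonneg (by positivity : 0 ≤ α / 4) hS
    linarith
end

section
/- Let ν, μ be real numbers satisfying either (0 < ν < 1 and 1 ≤ μ ≤ 1 + ν) or (1 < ν < 2 and either ν − 1 ≤ μ ≤ 1 or ν ≤ μ ≤ 2). Then the Mittag-Leffler function E_{ν,μ} has no zeros in the closed sector {z ∈ ℂ : |arg z| ≤ πν/2}; that is, E_{ν,μ}(z) ≠ 0 for every z ∈ ℂ with |arg z| ≤ πν/2 (including z = 0). -/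
/-!
The sector `|arg z| ≤ πν/2` is the image of the closed right half-plane under `w ↦ w^ν`. When
`1 ≤ μ ≤ 2` and `ν ≤ μ < 1 + ν`, with `ν ≠ 1`, there is a positive integrable kernel `κ` with
`w^{μ-1} E_{ν,μ}(w^ν) = e^w/ν - ∫ κ(x) e^{-w eˣ} dx` for `Re w ≥ 0`, `w ≠ 0`
(`mlKernel_representation`). It is obtained by comparing Laplace transforms: the left side has
transform `s^{ν-μ}/(s^ν-1)`, and `1/(ν(s-1)) - s^{ν-μ}/(s^ν-1)` is the Stieltjes transform of `κ`, by
contour integration (`stieltjes_tendsto`). Uniqueness of Laplace transforms (`ae_eq_of_laplace`) and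
the identity theorem then give the formula in the half-plane.

The modulus of the integral at `w` is at most its value at `Re w`, which is less than `e^{Re w}/ν`
since `E_{ν,μ} > 0` on the positive axis; if `Re w = 0` the inequality is strict because the integral
is not unimodular, and the mass of `κ` is at most `1/ν`. So `E_{ν,μ}` has no zeros in the sector
(`ml_ne_zero_of_lt`). When `ν < 1` and `μ = 1 + ν`, the same estimate applies to
`z E_{ν,1+ν}(z) = E_{ν,1}(z) - 1`, the mass now being at most `1/ν - 1` (`ml_ne_zero_edge`).

There remains `1 < ν < 2`, `ν - 1 ≤ μ ≤ 1`. Here `F = E_{ν,μ+1}` is covered by the previous case, and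
`E_{ν,μ} = μ F + ν z F'`, so at a zero `z₀` of `E_{ν,μ}` the logarithmic derivative of `F` is
`-μ/(ν z₀)`. Because `F` has order `1/ν < 1`, is bounded below at infinity in the sector up to a
power, and is real on the real axis, Phragmén–Lindelöf bounds by `1` the quotient of
`F` at the conjugate of the reflected point by `F`, on the half-plane inside the sector bounded by
the line through `z₀` parallel to an edge. On that line the quotient is unimodular. The value of
its logarithmic derivative at `z₀` contradicts this by a boundary maximum principle
(`eventually_eq_one_of_half_disc`), unless the quotient is constant; then `z₀` lies on the edge and
`F` is symmetric about it, which is incompatible with `F' 0 ≠ 0`.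
-/

open MeasureTheory Set Filter

/-- The two-parameter Mittag-Leffler function E_{nu, mu}(z). -/
noncomputable def mittagLeffler (ν μ : ℝ) (z : ℂ) : ℂ :=
  ∑' n : ℕ, z ^ n / ((Real.Gamma (μ + ν * n) : ℝ) : ℂ)

open Topology

/-! ### The power series -/

/-- A lower bound for `Γ` from the tail of its integral over `(M, ∞)`; as `M` is free, `Γ(μ + νn)`
grows faster than any geometric sequence. -/
lemma rpow_mul_exp_neg_le_Gamma {a M : ℝ} (ha : 1 ≤ a) (hM : 0 < M) :
    M ^ (a - 1) * Real.exp (-M) ≤ Real.Gamma a := by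
  rw [Real.Gamma_eq_integral (by linarith)]
  have hint : IntegrableOn (fun x : ℝ => Real.exp (-x) * x ^ (a - 1)) (Ioi 0) :=
    Real.GammaIntegral_convergent (by linarith)
  calc M ^ (a - 1) * Real.exp (-M) = ∫ x in Ioi M, Real.exp (-x) * M ^ (a - 1) := by
        rw [integral_mul_const, integral_exp_neg_Ioi]; ring
    _ ≤ ∫ x in Ioi M, Real.exp (-x) * x ^ (a - 1) := by
        refine setIntegral_mono_on ?_ (hint.mono_set (Ioi_subset_Ioi hM.le))
          measurableSet_Ioi fun x hx => ?_
        · exact (integrableOn_exp_neg_Ioi M).mul_const _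
        · have hx' : M < x := hx
          gcongr
    _ ≤ _ := by
        refine setIntegral_mono_set hint ?_ (LE.le.eventuallyLE (Ioi_subset_Ioi hM.le))
        filter_upwards [ae_restrict_mem measurableSet_Ioi] with x hx
        have hx' : 0 < x := hx
        simp only [Pi.zero_apply]; positivity

lemma ml_gamma_pos {ν μ : ℝ} (hν : 0 < ν) (hμ : 0 < μ) (n : ℕ) :
    0 < Real.Gamma (μ + ν * n) := Real.Gamma_pos_of_pos (by positivity)

lemma ml_summable {ν μ : ℝ} (hν : 0 < ν) (hμ : 0 < μ) {r : ℝ} (hr : 0 ≤ r) :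
    Summable fun n : ℕ => r ^ n / Real.Gamma (μ + ν * n) := by
  set M : ℝ := (2 * r + 1) ^ (1 / ν) with hM
  have hMpos : 0 < M := by positivity
  have hMν : M ^ ν = 2 * r + 1 := by
    rw [hM, ← Real.rpow_mul (by positivity), one_div_mul_cancel hν.ne', Real.rpow_one]
  have hg : Summable fun n : ℕ => (Real.exp M * M ^ (1 - μ)) * (r / (2 * r + 1)) ^ n := by
    refine (summable_geometric_of_lt_one (by positivity) ?_).mul_left _
    rw [div_lt_one (by positivity)]; linarith
  refine hg.of_norm_bounded_eventually_nat ?_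
  filter_upwards [eventually_ge_atTop ⌈1 / ν⌉₊] with n hn
  have hn' : 1 ≤ ν * n := by
    have := (Nat.le_ceil (1 / ν)).trans (Nat.cast_le.mpr hn)
    rw [div_le_iff₀ hν] at this; linarith
  have hG := rpow_mul_exp_neg_le_Gamma (a := μ + ν * n) (by linarith) hMpos
  have hGpos := ml_gamma_pos hν hμ n
  rw [Real.norm_of_nonneg (by positivity), div_le_iff₀ hGpos]
  have e : M ^ (μ + ν * n - 1) = M ^ (-(1 - μ)) * (2 * r + 1) ^ n := by
    rw [← hMν, ← Real.rpow_natCast, ← Real.rpow_mul hMpos.le, ← Real.rpow_add hMpos]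
    congr 1; ring
  rw [e, Real.rpow_neg hMpos.le, Real.exp_neg] at hG
  calc r ^ n = (Real.exp M * M ^ (1 - μ)) * (r / (2 * r + 1)) ^ n *
        ((M ^ (1 - μ))⁻¹ * (2 * r + 1) ^ n * (Real.exp M)⁻¹) := by
        have : M ^ (1 - μ) ≠ 0 := by positivity
        rw [div_pow]
        field_simp
    _ ≤ _ := by gcongr

lemma ml_norm_term {ν μ : ℝ} (hν : 0 < ν) (hμ : 0 < μ) (z : ℂ) (n : ℕ) :
    ‖z ^ n / ((Real.Gamma (μ + ν * n) : ℝ) : ℂ)‖ = ‖z‖ ^ n / Real.Gamma (μ + ν * n) := by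
  rw [norm_div, norm_pow, Complex.norm_of_nonneg (ml_gamma_pos hν hμ n).le]

lemma ml_summable_complex {ν μ : ℝ} (hν : 0 < ν) (hμ : 0 < μ) (z : ℂ) :
    Summable fun n : ℕ => z ^ n / ((Real.Gamma (μ + ν * n) : ℝ) : ℂ) := by
  refine Summable.of_norm ?_
  simp only [ml_norm_term hν hμ]
  exact ml_summable hν hμ (norm_nonneg z)

lemma ml_ofReal (ν μ x : ℝ) :
    mittagLeffler ν μ x = ((∑' n : ℕ, x ^ n / Real.Gamma (μ + ν * n) : ℝ) : ℂ) := by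
  rw [mittagLeffler, Complex.ofReal_tsum]; push_cast; rfl

lemma ml_norm_le {ν μ : ℝ} (hν : 0 < ν) (hμ : 0 < μ) (z : ℂ) :
    ‖mittagLeffler ν μ z‖ ≤ ∑' n : ℕ, ‖z‖ ^ n / Real.Gamma (μ + ν * n) := by
  refine tsum_of_norm_bounded (ml_summable hν hμ (norm_nonneg z)).hasSum fun n => ?_
  rw [ml_norm_term hν hμ]

lemma ml_conj (ν μ : ℝ) (z : ℂ) :
    mittagLeffler ν μ (starRingEnd ℂ z) = starRingEnd ℂ (mittagLeffler ν μ z) := by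
  rw [mittagLeffler, mittagLeffler, Complex.conj_tsum]
  simp

lemma ml_term_bound {ν μ : ℝ} (hν : 0 < ν) (hμ : 0 < μ) (R : ℝ) (n : ℕ) (w : ℂ)
    (hw : w ∈ Metric.ball (0 : ℂ) R) :
    ‖w ^ n / ((Real.Gamma (μ + ν * n) : ℝ) : ℂ)‖ ≤ R ^ n / Real.Gamma (μ + ν * n) := by
  rw [ml_norm_term hν hμ]
  have := (ml_gamma_pos hν hμ n).le
  gcongr
  simpa using (mem_ball_zero_iff.mp hw).le

lemma ml_differentiable {ν μ : ℝ} (hν : 0 < ν) (hμ : 0 < μ) :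
    Differentiable ℂ (mittagLeffler ν μ) := by
  intro z
  have h := Complex.differentiableOn_tsum_of_summable_norm
    (ml_summable hν hμ (r := ‖z‖ + 1) (by positivity))
    (F := fun (n : ℕ) (w : ℂ) => w ^ n / ((Real.Gamma (μ + ν * n) : ℝ) : ℂ))
    (fun n => by fun_prop) Metric.isOpen_ball (ml_term_bound hν hμ _)
  exact h.differentiableAt (Metric.isOpen_ball.mem_nhds (by simp))

lemma ml_hasSum_deriv {ν μ : ℝ} (hν : 0 < ν) (hμ : 0 < μ) (z : ℂ) :
    HasSum (fun n : ℕ => n * z ^ (n - 1) / ((Real.Gamma (μ + ν * n) : ℝ) : ℂ))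
      (deriv (mittagLeffler ν μ) z) := by
  have h := Complex.hasSum_deriv_of_summable_norm
    (ml_summable hν hμ (r := ‖z‖ + 1) (by positivity))
    (F := fun (n : ℕ) (w : ℂ) => w ^ n / ((Real.Gamma (μ + ν * n) : ℝ) : ℂ))
    (fun n => by fun_prop) Metric.isOpen_ball (ml_term_bound hν hμ _) (z := z) (by simp)
  convert! h using 2 with n
  simp

/-- `E_{ν,μ} = μ E_{ν,μ+1} + ν z E'_{ν,μ+1}`: this writes `E_{ν,μ}` through the logarithmic
derivative of `E_{ν,μ+1}`. -/
lemma ml_eq_deriv {ν μ : ℝ} (hν : 0 < ν) (hμ : 0 < μ) (z : ℂ) :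
    mittagLeffler ν μ z = μ * mittagLeffler ν (μ + 1) z
      + ν * z * deriv (mittagLeffler ν (μ + 1)) z := by
  have h1 := (ml_summable_complex hν (μ := μ + 1) (by linarith) z).hasSum.mul_left (μ : ℂ)
  have h2 := (ml_hasSum_deriv hν (μ := μ + 1) (by linarith) z).mul_left (ν * z : ℂ)
  refine ((h1.add h2).congr_fun ?_).tsum_eq
  intro n
  have hp : (μ + ν * n) ≠ 0 := by positivity
  have hG : Real.Gamma (μ + 1 + ν * n) = (μ + ν * n) * Real.Gamma (μ + ν * n) := by
    rw [← Real.Gamma_add_one hp]; congr 1; ring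
  have hGp := (ml_gamma_pos hν hμ n).ne'
  have hp' : ((μ : ℂ) + ν * n) ≠ 0 := by exact_mod_cast hp
  have hGp' : ((Real.Gamma (μ + ν * n) : ℝ) : ℂ) ≠ 0 := by exact_mod_cast hGp
  rw [hG]; push_cast
  rcases n with _ | n
  · simp only [Nat.cast_zero, mul_zero, add_zero, pow_zero] at *
    field_simp
    simp
  · simp only [Nat.add_sub_cancel]
    field_simp
    ring

/-- `E_{ν,μ}(z) = 1/Γ(μ) + z E_{ν,μ+ν}(z)`. -/
lemma ml_shift {ν μ : ℝ} (hν : 0 < ν) (hμ : 0 < μ) (z : ℂ) :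
    mittagLeffler ν μ z = 1 / ((Real.Gamma μ : ℝ) : ℂ) + z * mittagLeffler ν (μ + ν) z := by
  rw [mittagLeffler, (ml_summable_complex hν hμ z).tsum_eq_zero_add, mittagLeffler,
    ← tsum_mul_left]
  congr 1
  · simp
  · refine tsum_congr fun n => ?_
    have : μ + ν * ((n + 1 : ℕ) : ℝ) = μ + ν + ν * n := by push_cast; ring
    rw [this, pow_succ]; ring

lemma ml_zero {ν μ : ℝ} (hν : 0 < ν) (hμ : 0 < μ) :
    mittagLeffler ν μ 0 = 1 / ((Real.Gamma μ : ℝ) : ℂ) := by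
  rw [ml_shift hν hμ]; simp

lemma ml_real_ge {ν μ : ℝ} (hν : 0 < ν) (hμ : 0 < μ) {x : ℝ} (hx : 0 ≤ x) :
    1 / Real.Gamma μ ≤ ∑' n : ℕ, x ^ n / Real.Gamma (μ + ν * n) := by
  have h := (ml_summable hν hμ hx).le_tsum 0 fun n _ =>
    div_nonneg (pow_nonneg hx n) (ml_gamma_pos hν hμ n).le
  simpa using h

/-! ### The spectral density and its Stieltjes transform -/

/-- The spectral density of `w ↦ e^w/ν - w^{μ-1} E_{ν,μ}(w^ν)` in the logarithmic variable
`x = log r`, where `r` is the decay rate of the exponential `e^{-rw}`. Up to the factor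
`e^x` coming from `dr = e^x dx`, it is the jump across the negative axis of
`s ↦ s^{ν-μ}/(s^ν-1)`, divided by `2πi`. -/
noncomputable def mlKernel (ν μ x : ℝ) : ℝ :=
  -(1 / Real.pi) * (Real.exp ((ν - μ + 1) * x) *
    (Real.exp (ν * x) * Real.sin (Real.pi * μ) + Real.sin (Real.pi * (ν - μ)))) /
    (Real.exp (ν * x) ^ 2 - 2 * Real.exp (ν * x) * Real.cos (Real.pi * ν) + 1)

lemma mlKernel_den_pos {ν : ℝ} (hν : 0 < ν) (hν2 : ν < 2) (hν1 : ν ≠ 1) (x : ℝ) :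
    0 < Real.exp (ν * x) ^ 2 - 2 * Real.exp (ν * x) * Real.cos (Real.pi * ν) + 1 := by
  have hs : Real.sin (Real.pi * ν) ≠ 0 := by
    rw [Real.sin_ne_zero_iff]
    intro n hn
    have hpi := Real.pi_pos
    have : (n : ℝ) = ν := by
      have : Real.pi * ((n : ℝ) - ν) = 0 := by linarith
      rcases mul_eq_zero.mp this with h | h <;> linarith
    rw [← this] at hν hν2 hν1
    have h1 : 0 < n := by exact_mod_cast hν
    have h2 : n < 2 := by exact_mod_cast hν2
    exact hν1 (by exact_mod_cast (by omega : n = 1))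
  have h1 := Real.sin_sq_add_cos_sq (Real.pi * ν)
  have h2 : 0 < Real.sin (Real.pi * ν) ^ 2 := by positivity
  nlinarith [sq_nonneg (Real.exp (ν * x) - Real.cos (Real.pi * ν))]

lemma mlKernel_continuous {ν : ℝ} (hν : 0 < ν) (hν2 : ν < 2) (hν1 : ν ≠ 1) (μ : ℝ) :
    Continuous (mlKernel ν μ) := by
  unfold mlKernel
  refine Continuous.div (by fun_prop) (by fun_prop) fun x => (mlKernel_den_pos hν hν2 hν1 x).ne'

lemma mlKernel_pos {ν μ : ℝ} (hν : 0 < ν) (hν2 : ν < 2) (hν1 : ν ≠ 1)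
    (h1 : 1 ≤ μ) (h2 : μ ≤ 2) (h3 : ν ≤ μ) (h4 : μ < 1 + ν) (x : ℝ) :
    0 < mlKernel ν μ x := by
  have hpi := Real.pi_pos
  have hs1 : Real.sin (Real.pi * μ) ≤ 0 := by
    have : 0 ≤ Real.sin (Real.pi * μ - Real.pi) :=
      Real.sin_nonneg_of_nonneg_of_le_pi (by nlinarith) (by nlinarith)
    rw [Real.sin_sub_pi] at this; linarith
  have hs2 : Real.sin (Real.pi * (ν - μ)) ≤ 0 :=
    Real.sin_nonpos_of_nonpos_of_neg_pi_le (by nlinarith) (by nlinarith)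
  -- the two sines cannot vanish together: this would force `μ = ν ∈ {1, 2}`
  have hs : Real.sin (Real.pi * μ) < 0 ∨ Real.sin (Real.pi * (ν - μ)) < 0 := by
    rcases h3.eq_or_lt with h | h
    · left
      have h5 : 1 < μ := lt_of_le_of_ne h1 (by rw [← h]; exact hν1.symm)
      have : 0 < Real.sin (Real.pi * μ - Real.pi) :=
        Real.sin_pos_of_pos_of_lt_pi (by nlinarith) (by nlinarith)
      rw [Real.sin_sub_pi] at this; linarith
    · right
      exact Real.sin_neg_of_neg_of_neg_pi_lt (by nlinarith) (by nlinarith)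
  have hD := mlKernel_den_pos hν hν2 hν1 x
  have hq := Real.exp_pos (ν * x)
  have hneg : Real.exp (ν * x) * Real.sin (Real.pi * μ) + Real.sin (Real.pi * (ν - μ)) < 0 := by
    rcases hs with h | h <;> nlinarith
  unfold mlKernel
  refine div_pos ?_ hD
  have : 0 < 1 / Real.pi * (Real.exp ((ν - μ + 1) * x) *
    -(Real.exp (ν * x) * Real.sin (Real.pi * μ) + Real.sin (Real.pi * (ν - μ)))) := by
    have : 0 < -(Real.exp (ν * x) * Real.sin (Real.pi * μ) + Real.sin (Real.pi * (ν - μ))) := by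
      linarith
    positivity
  linarith

lemma exists_removable {f : ℂ → ℂ} {U : Set ℂ} (hU : IsOpen U) {a : ℂ} (ha : a ∈ U)
    (hf : DifferentiableOn ℂ f (U \ {a}))
    (hlim : Tendsto (fun z => (z - a) * f z) (𝓝[≠] a) (𝓝 0)) :
    ∃ g : ℂ → ℂ, DifferentiableOn ℂ g U ∧ ∀ z, z ≠ a → g z = f z := by
  refine ⟨_, Complex.differentiableOn_update_limUnder_of_isLittleO (hU.mem_nhds ha) hf ?_,
    fun z hz => Function.update_of_ne hz _ _⟩
  refine Asymptotics.isLittleO_of_tendsto' ?_ ?_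
  · filter_upwards [self_mem_nhdsWithin] with z hz h
    exact absurd (inv_eq_zero.mp h) (sub_ne_zero.mpr hz)
  · have h2 : Tendsto (fun z => (z - a) * f a) (𝓝[≠] a) (𝓝 0) := by
      have : Continuous fun z : ℂ => (z - a) * f a := by fun_prop
      simpa using (this.tendsto a).mono_left nhdsWithin_le_nhds
    have := hlim.sub h2
    simp only [sub_zero] at this
    refine this.congr fun z => ?_
    rw [div_inv_eq_mul]; ring

lemma exists_removable_two {f : ℂ → ℂ} {U : Set ℂ} (hU : IsOpen U) {a b : ℂ} (hab : a ≠ b)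
    (ha : a ∈ U) (hb : b ∈ U) (hf : DifferentiableOn ℂ f (U \ {a, b}))
    (hla : Tendsto (fun z => (z - a) * f z) (𝓝[≠] a) (𝓝 0))
    (hlb : Tendsto (fun z => (z - b) * f z) (𝓝[≠] b) (𝓝 0)) :
    ∃ g : ℂ → ℂ, DifferentiableOn ℂ g U ∧ ∀ z, z ≠ a → z ≠ b → g z = f z := by
  obtain ⟨g, hg, hgf⟩ := exists_removable (U := U \ {b}) (hU.sdiff isClosed_singleton)
    (a := a) ⟨ha, hab⟩ (hf.mono fun z hz => ⟨hz.1.1, by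
      simp only [mem_insert_iff, mem_singleton_iff, not_or]; exact ⟨hz.2, hz.1.2⟩⟩) hla
  obtain ⟨k, hk, hkg⟩ := exists_removable hU hb hg (by
    refine hlb.congr' ?_
    filter_upwards [nhdsWithin_le_nhds (isOpen_ne.mem_nhds hab.symm)] with z hz
    rw [hgf z hz])
  exact ⟨k, hk, fun z hza hzb => by rw [hkg z hzb, hgf z hza]⟩

lemma tendsto_simple_pole {N D : ℂ → ℂ} {a D' : ℂ} (hN : ContinuousAt N a)
    (hD : HasDerivAt D D' a) (hD0 : D a = 0) (hD' : D' ≠ 0) :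
    Tendsto (fun z => (z - a) * (N z / D z)) (𝓝[≠] a) (𝓝 (N a / D')) := by
  have h := hasDerivAt_iff_tendsto_slope.mp hD
  have h2 := (hN.tendsto.mono_left nhdsWithin_le_nhds).div h hD'
  refine h2.congr' ?_
  filter_upwards [self_mem_nhdsWithin] with z hz
  have hz' : z - a ≠ 0 := sub_ne_zero.mpr hz
  simp only [Pi.div_apply, slope_def_field, hD0, sub_zero]
  rw [div_div_eq_mul_div]; ring

lemma tendsto_mul_continuousAt {N : ℂ → ℂ} {a : ℂ} (hN : ContinuousAt N a) :
    Tendsto (fun z => (z - a) * N z) (𝓝[≠] a) (𝓝 0) := by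
  have : ContinuousAt (fun z => (z - a) * N z) a := by fun_prop
  simpa using this.tendsto.mono_left nhdsWithin_le_nhds

lemma tendsto_exp_mul_left {a : ℝ} (ha : 0 < a) :
    Tendsto (fun z : ℂ => Complex.exp (a * z)) (comap Complex.re atBot) (𝓝 0) := by
  rw [tendsto_zero_iff_norm_tendsto_zero]
  simp only [Complex.norm_exp, Complex.re_ofReal_mul]
  exact Real.tendsto_exp_atBot.comp (tendsto_comap.const_mul_atBot ha)

lemma tendsto_exp_mul_right {a : ℝ} (ha : 0 < a) :
    Tendsto (fun z : ℂ => Complex.exp (-(a * z))) (comap Complex.re atTop) (𝓝 0) := by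
  rw [tendsto_zero_iff_norm_tendsto_zero]
  simp only [Complex.norm_exp, Complex.neg_re, Complex.re_ofReal_mul]
  exact Real.tendsto_exp_atBot.comp
    (tendsto_neg_atTop_atBot.comp (tendsto_comap.const_mul_atTop ha))

lemma tendsto_vertical_integral {F : ℂ → ℂ} (hF : Measurable F) {L : ℂ} {l : Filter ℝ}
    [l.IsCountablyGenerated]
    (h : Tendsto F (comap Complex.re l) (𝓝 L)) :
    Tendsto (fun T : ℝ => ∫ y in (-Real.pi)..Real.pi, F (T + y * Complex.I)) l
      (𝓝 (2 * Real.pi * L)) := by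
  have hc : ∫ _y in (-Real.pi)..Real.pi, L = 2 * Real.pi * L := by
    rw [intervalIntegral.integral_const, Complex.real_smul]; push_cast; ring
  rw [← hc]
  have hT (y : ℝ) : Tendsto (fun T : ℝ => (T : ℂ) + y * Complex.I) l (comap Complex.re l) := by
    rw [tendsto_comap_iff]
    refine tendsto_id.congr fun T => by simp
  refine intervalIntegral.tendsto_integral_filter_of_dominated_convergence (fun _ => ‖L‖ + 1)
    ?_ ?_ (by simp) ?_
  · exact Eventually.of_forall fun T => (hF.comp (by fun_prop)).aestronglyMeasurable
  · have h1 : ∀ᶠ z in comap Complex.re l, ‖F z‖ ≤ ‖L‖ + 1 :=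
      h.norm.eventually_le_const (by linarith)
    rw [eventually_comap] at h1
    filter_upwards [h1] with T hT
    exact Eventually.of_forall fun y _ => hT _ (by simp)
  · exact Eventually.of_forall fun y _ => h.comp (hT y)

lemma exp_mul_eq_one {a : ℝ} (ha : 0 < a) {z : ℂ} (hz : |z.im| < 2 * Real.pi / a)
    (h : Complex.exp (a * z) = 1) : z = 0 := by
  obtain ⟨n, hn⟩ := Complex.exp_eq_one_iff.mp h
  have him := congrArg Complex.im hn
  have hre := congrArg Complex.re hn
  simp only [Complex.mul_im, Complex.mul_re, Complex.ofReal_re, Complex.ofReal_im, Complex.intCast_re,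
    Complex.intCast_im, Complex.I_re, Complex.I_im, Complex.re_ofNat, Complex.im_ofNat] at him hre
  ring_nf at him hre
  have hpi := Real.pi_pos
  rw [lt_div_iff₀ ha] at hz
  have h1 : |(n : ℝ)| < 1 := by
    have : |a * z.im| = |(n : ℝ)| * (2 * Real.pi) := by
      rw [him, show (n : ℝ) * Real.pi * 2 = n * (2 * Real.pi) by ring, abs_mul,
        abs_of_pos (by positivity : 0 < 2 * Real.pi)]
    rw [abs_mul, abs_of_pos ha] at this
    nlinarith
  have h2 : n = 0 := by
    have : |n| < 1 := by exact_mod_cast h1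
    exact Int.abs_lt_one_iff.mp this
  rw [h2] at him
  simp only [Int.cast_zero, zero_mul, mul_eq_zero, ha.ne', false_or] at him hre
  exact Complex.ext hre him

/-- The jump of the contour integrand between the lines `Im = -π` and `Im = π`. -/
lemma mlKernel_jump {ν : ℝ} (hν : 0 < ν) (hν2 : ν < 2) (hν1 : ν ≠ 1) (μ x : ℝ) {S : ℝ}
    (hS : 0 < S) :
    Complex.exp ((ν - μ + 1 : ℝ) * (x + (-Real.pi : ℝ) * Complex.I)) /
        ((Complex.exp (ν * (x + (-Real.pi : ℝ) * Complex.I)) - 1) * (-(Real.exp x : ℂ) - S)) -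
      Complex.exp ((ν - μ + 1 : ℝ) * (x + (Real.pi : ℝ) * Complex.I)) /
        ((Complex.exp (ν * (x + (Real.pi : ℝ) * Complex.I)) - 1) * (-(Real.exp x : ℂ) - S)) =
    -(2 * Real.pi * Complex.I) * ((mlKernel ν μ x / (Real.exp x + S) : ℝ) : ℂ) := by
  set u := Complex.exp (Real.pi * ν * Complex.I) with hu
  set v := Complex.exp (Real.pi * μ * Complex.I) with hv
  have hu0 : u ≠ 0 := Complex.exp_ne_zero _
  have hv0 : v ≠ 0 := Complex.exp_ne_zero _
  set q : ℂ := Complex.exp (ν * x) with hq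
  set p : ℂ := Complex.exp ((ν - μ + 1) * x) with hp
  have e1 : Complex.exp ((ν - μ + 1 : ℝ) * (x + (-Real.pi : ℝ) * Complex.I)) = -(p * v / u) := by
    have : ((ν - μ + 1 : ℝ) : ℂ) * (x + (-Real.pi : ℝ) * Complex.I) =
      (ν - μ + 1) * x + (Real.pi * μ * Complex.I) - (Real.pi * ν * Complex.I)
        - Real.pi * Complex.I := by
      push_cast; ring
    rw [this, Complex.exp_sub, Complex.exp_sub, Complex.exp_add, Complex.exp_pi_mul_I, div_neg,
      div_one]
  have e2 : Complex.exp ((ν - μ + 1 : ℝ) * (x + (Real.pi : ℝ) * Complex.I)) = -(p * u / v) := by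
    have : ((ν - μ + 1 : ℝ) : ℂ) * (x + (Real.pi : ℝ) * Complex.I) =
      (ν - μ + 1) * x + (Real.pi * ν * Complex.I) - (Real.pi * μ * Complex.I)
        + Real.pi * Complex.I := by
      push_cast; ring
    rw [this, Complex.exp_add, Complex.exp_sub, Complex.exp_add, Complex.exp_pi_mul_I, mul_neg,
      mul_one]
  have e3 : Complex.exp (ν * (x + (-Real.pi : ℝ) * Complex.I)) = q / u := by
    rw [hq, hu, ← Complex.exp_sub]; congr 1; push_cast; ring
  have e4 : Complex.exp (ν * (x + (Real.pi : ℝ) * Complex.I)) = q * u := by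
    rw [hq, hu, ← Complex.exp_add]; congr 1; ring
  have s1 : Complex.sin (Real.pi * μ) = (v⁻¹ - v) * Complex.I / 2 := by
    rw [Complex.sin, hv, ← Complex.exp_neg]; congr 4; ring
  have s2 : Complex.sin (Real.pi * (ν - μ)) = (v / u - u / v) * Complex.I / 2 := by
    rw [Complex.sin, hv, hu, ← Complex.exp_sub, ← Complex.exp_sub]; congr 4 <;> ring
  have s3 : Complex.cos (Real.pi * ν) = (u + u⁻¹) / 2 := by
    rw [Complex.cos, hu, ← Complex.exp_neg]; congr 3; ring
  have hDr := (mlKernel_den_pos hν hν2 hν1 x).ne'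
  have hD : q ^ 2 - 2 * q * ((u + u⁻¹) / 2) + 1 ≠ 0 := by
    rw [← s3]
    have : ((Real.exp (ν * x) ^ 2 - 2 * Real.exp (ν * x) * Real.cos (Real.pi * ν) + 1 : ℝ) : ℂ)
      ≠ 0 := by exact_mod_cast hDr
    push_cast at this; exact this
  have hfac : u * (q ^ 2 - 2 * q * ((u + u⁻¹) / 2) + 1) = (q - u) * (q * u - 1) := by
    field_simp; ring
  have hfac0 : (q - u) * (q * u - 1) ≠ 0 := by rw [← hfac]; exact mul_ne_zero hu0 hD
  have h1 : q - u ≠ 0 := left_ne_zero_of_mul hfac0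
  have h2 : q * u - 1 ≠ 0 := right_ne_zero_of_mul hfac0
  have hES : Complex.exp x + S ≠ 0 := by
    have : ((Real.exp x + S : ℝ) : ℂ) ≠ 0 := by
      have : Real.exp x + S ≠ 0 := by positivity
      exact_mod_cast this
    push_cast at this; exact this
  have hpi : (Real.pi : ℂ) ≠ 0 := by exact_mod_cast Real.pi_ne_zero
  have hK : ((mlKernel ν μ x / (Real.exp x + S) : ℝ) : ℂ) =
      -(1 / Real.pi) * (p * (q * ((v⁻¹ - v) * Complex.I / 2) +
        (v / u - u / v) * Complex.I / 2)) / (q ^ 2 - 2 * q * ((u + u⁻¹) / 2) + 1) /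
        (Complex.exp x + S) := by
    rw [← s1, ← s2, ← s3]
    unfold mlKernel
    push_cast
    rfl
  have hD' : q ^ 2 - 2 * q * ((u + u⁻¹) / 2) + 1 = (q - u) * (q * u - 1) / u := by
    rw [← hfac]; field_simp
  rw [hK, e1, e2, e3, e4, hD']
  have h3 : q / u - 1 = (q - u) / u := by field_simp
  have h4 : -((Real.exp x : ℝ) : ℂ) - S = -(Complex.exp x + S) := by push_cast; ring
  rw [h3, h4]
  generalize Complex.exp x + S = E at hES
  have hI := Complex.I_sq
  have h5 : u * q - 1 ≠ 0 := by rwa [mul_comm]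
  field_simp
  ring_nf
  simp only [hI]
  ring

/-- The Stieltjes transform of the kernel at `e^{x₀}`, as an improper integral. It is computed by
integrating `e^{cz} / ((e^{νz}-1)(e^z-e^{x₀}))`, `c = ν-μ+1`, over the boundary of
`[-T,T] × [-π,π]`; the poles `0` and `x₀` are first removed by subtracting multiples of
`e^z/(e^z-1)` and `e^z/(e^z-e^{x₀})`, which are `2πi`-periodic. The horizontal edges yield the kernel
and the vertical ones the value on the right. -/
lemma stieltjes_tendsto {ν μ : ℝ} (hν : 0 < ν) (hν2 : ν < 2) (hν1 : ν ≠ 1) (hμ : 0 < μ)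
    (h4 : μ < 1 + ν) {x₀ : ℝ} (hx₀ : 0 < x₀) :
    Tendsto (fun T : ℝ => ∫ x in (-T)..T, mlKernel ν μ x / (Real.exp x + Real.exp x₀)) atTop
      (𝓝 (1 / (ν * (Real.exp x₀ - 1)) -
        Real.exp ((ν - μ) * x₀) / (Real.exp (ν * x₀) - 1))) := by
  have hpi := Real.pi_pos
  have hc : 0 < ν - μ + 1 := by linarith
  set c : ℝ := ν - μ + 1 with hcdef
  set S : ℝ := Real.exp x₀ with hSdef
  have hSpos : 0 < S := Real.exp_pos _
  have hS1 : 1 < S := Real.one_lt_exp_iff.mpr hx₀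
  have hQ1 : 1 < Real.exp (ν * x₀) := Real.one_lt_exp_iff.mpr (by positivity)
  have hSc : (S : ℂ) = Complex.exp x₀ := by rw [hSdef]; push_cast; rfl
  have hS0 : (S : ℂ) ≠ 0 := by exact_mod_cast hSpos.ne'
  have hνc : (ν : ℂ) ≠ 0 := by exact_mod_cast hν.ne'
  have h1S : (1 : ℂ) - S ≠ 0 := by
    have : (1 : ℝ) - S ≠ 0 := by linarith
    exact_mod_cast this
  have hQc : Complex.exp (ν * x₀) - 1 ≠ 0 := by
    have : Real.exp (ν * x₀) - 1 ≠ 0 := by linarith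
    exact_mod_cast this
  -- the residues at `0` and `x₀` of the contour integrand
  set c₁ : ℂ := 1 / (ν * (1 - S)) with hc₁
  set c₂ : ℂ := Complex.exp (c * x₀) / ((Complex.exp (ν * x₀) - 1) * S) with hc₂
  set A : ℂ → ℂ := fun z =>
    Complex.exp (c * z) / ((Complex.exp (ν * z) - 1) * (Complex.exp z - S)) with hA
  set B : ℂ → ℂ := fun z => Complex.exp z / (Complex.exp z - 1) with hB
  set C : ℂ → ℂ := fun z => Complex.exp z / (Complex.exp z - S) with hC
  set F : ℂ → ℂ := fun z => A z - c₁ * B z - c₂ * C z with hF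
  set U : Set ℂ := {z | |z.im| < 2 * Real.pi / ν} ∩ {z | |z.im| < 2 * Real.pi / 1} with hU
  have hUo : IsOpen U := by
    refine IsOpen.inter ?_ ?_ <;> exact isOpen_lt (by fun_prop) (by fun_prop)
  have hUre (x : ℝ) : (x : ℂ) ∈ U := by
    constructor <;> simp only [mem_ofPred_eq, Complex.ofReal_im, abs_zero] <;> positivity
  have hx0ne : (x₀ : ℂ) ≠ 0 := by exact_mod_cast hx₀.ne'
  have hne1 : ∀ z ∈ U, z ≠ 0 → Complex.exp (ν * z) - 1 ≠ 0 := fun z hz h0 h =>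
    h0 (exp_mul_eq_one hν hz.1 (sub_eq_zero.mp h))
  have hne2 : ∀ z ∈ U, z ≠ 0 → Complex.exp z - 1 ≠ 0 := fun z hz h0 h =>
    h0 (exp_mul_eq_one one_pos hz.2 (by simpa using sub_eq_zero.mp h))
  have hne3 : ∀ z ∈ U, z ≠ x₀ → Complex.exp z - S ≠ 0 := fun z hz h0 h => by
    refine h0 (sub_eq_zero.mp (exp_mul_eq_one one_pos (z := z - x₀) (by simpa using hz.2) ?_))
    rw [Complex.ofReal_one, one_mul, Complex.exp_sub, ← hSc, sub_eq_zero.mp h, div_self hS0]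
  have hFd : DifferentiableOn ℂ F (U \ {0, (x₀ : ℂ)}) := by
    intro z hz
    simp only [Set.mem_sdiff, mem_insert_iff, mem_singleton_iff, not_or] at hz
    obtain ⟨hzU, hz0, hz1⟩ := hz
    have g1 := hne1 z hzU hz0
    have g2 := hne2 z hzU hz0
    have g3 := hne3 z hzU hz1
    refine DifferentiableAt.differentiableWithinAt ?_
    refine (((?_ : DifferentiableAt ℂ A z).sub ((?_ : DifferentiableAt ℂ B z).const_mul c₁)).sub
      ((?_ : DifferentiableAt ℂ C z).const_mul c₂))
    · exact DifferentiableAt.div (by fun_prop) (by fun_prop) (mul_ne_zero g1 g3)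
    · exact DifferentiableAt.div (by fun_prop) (by fun_prop) g2
    · exact DifferentiableAt.div (by fun_prop) (by fun_prop) g3
  have hlim0 : Tendsto (fun z => (z - 0) * F z) (𝓝[≠] 0) (𝓝 0) := by
    have t1 : Tendsto (fun z => (z - 0) * A z) (𝓝[≠] 0) (𝓝 c₁) := by
      have := tendsto_simple_pole (N := fun z => Complex.exp (c * z))
        (D := fun z => (Complex.exp (ν * z) - 1) * (Complex.exp z - S)) (a := 0)
        (D' := ν * (1 - S)) (by fun_prop) (by
          have d1 : HasDerivAt (fun z : ℂ => Complex.exp (ν * z) - 1) ν 0 := by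
            simpa using (((hasDerivAt_id (0 : ℂ)).const_mul (ν : ℂ)).cexp).sub_const 1
          have d2 : HasDerivAt (fun z : ℂ => Complex.exp z - S) 1 0 := by
            simpa using (Complex.hasDerivAt_exp (0 : ℂ)).sub_const (S : ℂ)
          simpa using d1.fun_mul d2) (by simp) (mul_ne_zero hνc h1S)
      simpa [hc₁] using this
    have t2 : Tendsto (fun z => (z - 0) * B z) (𝓝[≠] 0) (𝓝 1) := by
      have := tendsto_simple_pole (N := Complex.exp)
        (D := fun z => Complex.exp z - 1) (a := 0)
        (D' := 1) (by fun_prop) (by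
          simpa using (Complex.hasDerivAt_exp (0 : ℂ)).sub_const (1 : ℂ)) (by simp) one_ne_zero
      simpa using this
    have t3 : Tendsto (fun z => (z - 0) * C z) (𝓝[≠] 0) (𝓝 0) :=
      tendsto_mul_continuousAt (ContinuousAt.div (by fun_prop) (by fun_prop) (by simpa using h1S))
    have := (t1.sub (t2.const_mul c₁)).sub (t3.const_mul c₂)
    simp only [mul_one, mul_zero, sub_self] at this
    refine this.congr fun z => ?_
    simp only [hF]; ring
  have hlim1 : Tendsto (fun z => (z - x₀) * F z) (𝓝[≠] (x₀ : ℂ)) (𝓝 0) := by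
    have t1 : Tendsto (fun z => (z - x₀) * A z) (𝓝[≠] (x₀ : ℂ)) (𝓝 c₂) := by
      have := tendsto_simple_pole (N := fun z => Complex.exp (c * z))
        (D := fun z => (Complex.exp (ν * z) - 1) * (Complex.exp z - S)) (a := x₀)
        (D' := (Complex.exp (ν * x₀) - 1) * S) (by fun_prop) (by
          have d1 : HasDerivAt (fun z : ℂ => Complex.exp (ν * z) - 1)
              (Complex.exp (ν * x₀) * ν) (x₀ : ℂ) := by
            simpa using (((hasDerivAt_id (x₀ : ℂ)).const_mul (ν : ℂ)).cexp).sub_const 1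
          have d2 : HasDerivAt (fun z : ℂ => Complex.exp z - S) (S : ℂ) (x₀ : ℂ) := by
            rw [hSc]
            exact (Complex.hasDerivAt_exp (x₀ : ℂ)).sub_const _
          have := d1.mul d2
          rw [← hSc, sub_self, mul_zero, zero_add] at this
          exact this) (by simp [hSc]) (mul_ne_zero hQc hS0)
      simpa [hc₂] using this
    have t2 : Tendsto (fun z => (z - x₀) * C z) (𝓝[≠] (x₀ : ℂ)) (𝓝 1) := by
      have := tendsto_simple_pole (N := Complex.exp)
        (D := fun z => Complex.exp z - S) (a := x₀)
        (D' := S) (by fun_prop) (by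
          rw [hSc]; exact (Complex.hasDerivAt_exp (x₀ : ℂ)).sub_const _) (by simp [hSc]) hS0
      rwa [← hSc, div_self hS0] at this
    have t3 : Tendsto (fun z => (z - x₀) * B z) (𝓝[≠] (x₀ : ℂ)) (𝓝 0) :=
      tendsto_mul_continuousAt (ContinuousAt.div (by fun_prop) (by fun_prop)
        (hne2 _ (hUre x₀) hx0ne))
    have := (t1.sub (t3.const_mul c₁)).sub (t2.const_mul c₂)
    simp only [mul_one, mul_zero, sub_self, sub_zero] at this
    refine this.congr fun z => ?_
    simp only [hF]; ring
  obtain ⟨g, hg, hgF⟩ := exists_removable_two hUo hx0ne.symm (by simpa using hUre 0) (hUre x₀)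
    hFd hlim0 hlim1
  have hFm : Measurable F := by
    simp only [hF, hA, hB, hC]; fun_prop
  have hright : Tendsto F (comap Complex.re atTop) (𝓝 (-(c₁ + c₂))) := by
    have r1 := tendsto_exp_mul_right hμ
    have r2 := tendsto_exp_mul_right hν
    have r3 : Tendsto (fun z : ℂ => Complex.exp (-z)) (comap Complex.re atTop) (𝓝 0) := by
      simpa using tendsto_exp_mul_right one_pos
    have k1 : Tendsto (fun z : ℂ => 1 - Complex.exp (-(ν * z))) (comap Complex.re atTop) (𝓝 1) := by
      simpa using r2.const_sub 1
    have k2 : Tendsto (fun z : ℂ => 1 - S * Complex.exp (-z)) (comap Complex.re atTop) (𝓝 1) := by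
      simpa using (r3.const_mul (S : ℂ)).const_sub 1
    have k3 : Tendsto (fun z : ℂ => 1 - Complex.exp (-z)) (comap Complex.re atTop) (𝓝 1) := by
      simpa using r3.const_sub 1
    have := (((r1.div (k1.mul k2) (by simp)).sub ((k3.inv₀ one_ne_zero).const_mul c₁)).sub
      ((k2.inv₀ one_ne_zero).const_mul c₂))
    have e : (0 : ℂ) / (1 * 1) - c₁ * 1⁻¹ - c₂ * 1⁻¹ = -(c₁ + c₂) := by simp; ring
    rw [e] at this
    refine this.congr fun z => ?_
    have a1 : A z = Complex.exp (-(μ * z)) /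
        ((1 - Complex.exp (-(ν * z))) * (1 - S * Complex.exp (-z))) := by
      have n1 : Complex.exp (ν * z) - 1 = Complex.exp (ν * z) * (1 - Complex.exp (-(ν * z))) := by
        rw [mul_sub, ← Complex.exp_add]; simp
      have n2 : Complex.exp z - S = Complex.exp z * (1 - S * Complex.exp (-z)) := by
        rw [mul_sub, mul_left_comm, ← Complex.exp_add]; simp
      have n3 : Complex.exp (c * z) =
          (Complex.exp (ν * z) * Complex.exp z) * Complex.exp (-(μ * z)) := by
        rw [← Complex.exp_add, ← Complex.exp_add]; congr 1; rw [hcdef]; push_cast; ring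
      simp only [hA]
      rw [n1, n2, n3, mul_mul_mul_comm, mul_div_mul_left]
      exact mul_ne_zero (Complex.exp_ne_zero _) (Complex.exp_ne_zero _)
    have a2 : B z = (1 - Complex.exp (-z))⁻¹ := by
      have n2 : Complex.exp z - 1 = Complex.exp z * (1 - Complex.exp (-z)) := by
        rw [mul_sub, ← Complex.exp_add]; simp
      simp only [hB]
      rw [n2, div_mul_eq_div_div, div_self (Complex.exp_ne_zero _), one_div]
    have a3 : C z = (1 - S * Complex.exp (-z))⁻¹ := by
      have n2 : Complex.exp z - S = Complex.exp z * (1 - S * Complex.exp (-z)) := by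
        rw [mul_sub, mul_left_comm, ← Complex.exp_add]; simp
      simp only [hC]
      rw [n2, div_mul_eq_div_div, div_self (Complex.exp_ne_zero _), one_div]
    simp only [hF]
    rw [a1, a2, a3]
    rfl
  have hleft : Tendsto F (comap Complex.re atBot) (𝓝 0) := by
    have r1 := tendsto_exp_mul_left hc
    have r2 := tendsto_exp_mul_left hν
    have r3 : Tendsto (fun z : ℂ => Complex.exp z) (comap Complex.re atBot) (𝓝 0) := by
      simpa using tendsto_exp_mul_left one_pos
    have := ((r1.div ((r2.sub_const 1).mul (r3.sub_const (S : ℂ))) (by simpa using hS0)).sub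
      ((r3.div (r3.sub_const 1) (by simp)).const_mul c₁)).sub
      ((r3.div (r3.sub_const (S : ℂ)) (by simpa using hS0)).const_mul c₂)
    simpa using this
  have hR := tendsto_vertical_integral hFm hright
  have hL := (tendsto_vertical_integral hFm hleft).comp tendsto_neg_atTop_atBot
  -- the contribution of the two horizontal edges
  have hjump (x : ℝ) : F (x + (-Real.pi : ℝ) * Complex.I) - F (x + (Real.pi : ℝ) * Complex.I) =
      -(2 * Real.pi * Complex.I) * ((mlKernel ν μ x / (Real.exp x + S) : ℝ) : ℂ) := by
    rw [← mlKernel_jump hν hν2 hν1 μ x hSpos]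
    have m1 : Complex.exp (x + (-Real.pi : ℝ) * Complex.I) = -(Real.exp x : ℂ) := by
      rw [Complex.ofReal_neg, neg_mul, Complex.exp_add, Complex.exp_neg, Complex.exp_pi_mul_I]
      simp
    have m2 : Complex.exp (x + (Real.pi : ℝ) * Complex.I) = -(Real.exp x : ℂ) := by
      rw [Complex.exp_add, Complex.exp_pi_mul_I]; simp
    simp only [hF, hA, hB, hC, m1, m2]
    ring
  have hν2pi : Real.pi < 2 * Real.pi / ν := by
    rw [lt_div_iff₀ hν]; nlinarith
  have hedge (T : ℝ) (hT : x₀ < T) :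
      -(2 * Real.pi * Complex.I) *
        ((∫ x in (-T)..T, mlKernel ν μ x / (Real.exp x + S) : ℝ) : ℂ) =
      -(Complex.I * ((∫ y in (-Real.pi)..Real.pi, F (T + y * Complex.I)) -
        ∫ y in (-Real.pi)..Real.pi, F ((-T : ℝ) + y * Complex.I))) := by
    have hrect := Complex.integral_boundary_rect_eq_zero_of_differentiableOn g
      ⟨-T, -Real.pi⟩ ⟨T, Real.pi⟩ (hg.mono (by
        intro z hz
        have := hz.2
        simp only [mem_preimage] at this
        rw [uIcc_of_le (by linarith)] at this
        have h3 : |z.im| ≤ Real.pi := abs_le.mpr this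
        exact ⟨lt_of_le_of_lt h3 hν2pi, lt_of_le_of_lt h3 (by simp; linarith)⟩))
    have hmem (x : ℝ) (y : ℝ) (hy : |y| ≤ Real.pi) : (x : ℂ) + y * Complex.I ∈ U :=
      ⟨by simpa using lt_of_le_of_lt hy hν2pi, by simpa using lt_of_le_of_lt hy (by linarith)⟩
    have hgx (x : ℝ) (y : ℝ) (hy : y ≠ 0) : g (x + y * Complex.I) = F (x + y * Complex.I) := by
      refine hgF _ ?_ ?_
      · intro h; exact hy (by simpa using congrArg Complex.im h)
      · intro h; exact hy (by simpa using congrArg Complex.im h)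
    have hgy (x : ℝ) (y : ℝ) (hx : x₀ < |x|) : g (x + y * Complex.I) = F (x + y * Complex.I) := by
      refine hgF _ ?_ ?_
      · intro h
        have : x = 0 := by simpa using congrArg Complex.re h
        rw [this, abs_zero] at hx; linarith
      · intro h
        have : x = x₀ := by simpa using congrArg Complex.re h
        rw [this, abs_of_pos hx₀] at hx; linarith
    have hcont (y : ℝ) (hy : |y| ≤ Real.pi) : Continuous fun x : ℝ => g (x + y * Complex.I) :=
      hg.continuousOn.comp_continuous (by fun_prop) fun x => hmem x y hy
    rw [← intervalIntegral.integral_sub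
      ((hcont (-Real.pi) (by rw [abs_neg, abs_of_pos hpi])).intervalIntegrable _ _)
      ((hcont Real.pi (by rw [abs_of_pos hpi])).intervalIntegrable _ _)] at hrect
    have i1 : (∫ x in (-T)..T, g (x + (-Real.pi : ℝ) * Complex.I) - g (x + Real.pi * Complex.I)) =
        -(2 * Real.pi * Complex.I) *
        ((∫ x in (-T)..T, mlKernel ν μ x / (Real.exp x + S) : ℝ) : ℂ) := by
      rw [← intervalIntegral.integral_ofReal, ← intervalIntegral.integral_const_mul]
      refine intervalIntegral.integral_congr fun x _ => ?_
      rw [hgx x _ (neg_ne_zero.mpr hpi.ne'), hgx x _ hpi.ne', hjump]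
    have i2 : (∫ y in (-Real.pi)..Real.pi, g (T + y * Complex.I)) =
        ∫ y in (-Real.pi)..Real.pi, F (T + y * Complex.I) :=
      intervalIntegral.integral_congr fun y _ => hgy T y (lt_of_lt_of_le hT (le_abs_self T))
    have i3 : (∫ y in (-Real.pi)..Real.pi, g ((-T : ℝ) + y * Complex.I)) =
        ∫ y in (-Real.pi)..Real.pi, F ((-T : ℝ) + y * Complex.I) :=
      intervalIntegral.integral_congr fun y _ => hgy (-T) y
        (by rw [abs_neg]; exact lt_of_lt_of_le hT (le_abs_self T))
    rw [i1, i2, i3, smul_eq_mul, smul_eq_mul] at hrect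
    linear_combination hrect
  have hlimc : Tendsto (fun T : ℝ =>
      ((∫ x in (-T)..T, mlKernel ν μ x / (Real.exp x + S) : ℝ) : ℂ)) atTop (𝓝 (-(c₁ + c₂))) := by
    have := (hR.sub hL).const_mul (1 / (2 * Real.pi : ℂ))
    have e : 1 / (2 * Real.pi : ℂ) * (2 * Real.pi * -(c₁ + c₂) - 2 * Real.pi * 0) =
        -(c₁ + c₂) := by
      have : (Real.pi : ℂ) ≠ 0 := by exact_mod_cast hpi.ne'
      field_simp; ring
    rw [e] at this
    refine this.congr' ?_
    filter_upwards [eventually_gt_atTop x₀] with T hT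
    have h := hedge T hT
    have hpc : (Real.pi : ℂ) ≠ 0 := by exact_mod_cast hpi.ne'
    have hI := Complex.I_ne_zero
    simp only [Function.comp]
    have h' : (2 * Real.pi : ℂ) *
        ((∫ x in (-T)..T, mlKernel ν μ x / (Real.exp x + S) : ℝ) : ℂ) =
      ((∫ y in (-Real.pi)..Real.pi, F (T + y * Complex.I)) -
        ∫ y in (-Real.pi)..Real.pi, F ((-T : ℝ) + y * Complex.I)) := by
      refine mul_left_cancel₀ hI ?_
      linear_combination -h
    rw [← h']; field_simp
  have hval : -(c₁ + c₂) = ((1 / (ν * (S - 1)) -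
      Real.exp ((ν - μ) * x₀) / (Real.exp (ν * x₀) - 1) : ℝ) : ℂ) := by
    have e : Complex.exp (c * x₀) = Complex.exp ((ν - μ) * x₀) * S := by
      rw [hSc, ← Complex.exp_add, hcdef]; congr 1; push_cast; ring
    rw [hc₁, hc₂, e]
    push_cast
    have h1S' : (S : ℂ) - 1 ≠ 0 := by rw [← neg_sub]; exact neg_ne_zero.mpr h1S
    rw [mul_div_mul_right _ _ hS0, show (1 : ℂ) - S = -(S - 1) by ring]
    field_simp
    ring
  rw [hval] at hlimc
  have := (Complex.continuous_re.tendsto _).comp hlimc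
  simpa only [Function.comp_def, Complex.ofReal_re] using this

/-! ### Uniqueness of Laplace transforms -/

/-- Two finite measures on `ℝ` with equal, finite exponential moments on `(-∞, 1)` coincide:
the complex moment generating functions are analytic on a strip around `iℝ`, hence equal there,
so the characteristic functions agree. -/
lemma measure_ext_of_exp_moments {m₁ m₂ : Measure ℝ} [IsFiniteMeasure m₁] [IsFiniteMeasure m₂]
    (h : ∀ τ < (1 : ℝ), ∫⁻ t, ENNReal.ofReal (Real.exp (τ * t)) ∂m₁ =
      ∫⁻ t, ENNReal.ofReal (Real.exp (τ * t)) ∂m₂)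
    (hfin : ∀ τ < (1 : ℝ), ∫⁻ t, ENNReal.ofReal (Real.exp (τ * t)) ∂m₂ ≠ ⊤) : m₁ = m₂ := by
  have key (m : Measure ℝ)
      (hm : ∀ τ < (1 : ℝ), ∫⁻ t, ENNReal.ofReal (Real.exp (τ * t)) ∂m ≠ ⊤) :
      Iio 1 ⊆ interior (ProbabilityTheory.integrableExpSet id m) := by
    refine interior_maximal (fun τ hτ => ?_) isOpen_Iio
    refine ⟨by fun_prop, ?_⟩
    rw [hasFiniteIntegral_iff_ofReal (ae_of_all _ fun t => (Real.exp_pos _).le)]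
    exact (hm τ hτ).lt_top
  have k₁ := key m₁ fun τ hτ => by rw [h τ hτ]; exact hfin τ hτ
  have k₂ := key m₂ hfin
  have hA₁ : AnalyticOnNhd ℂ (ProbabilityTheory.complexMGF id m₁) {z | z.re < 1} :=
    ProbabilityTheory.analyticOnNhd_complexMGF.mono fun z hz => k₁ hz
  have hA₂ : AnalyticOnNhd ℂ (ProbabilityTheory.complexMGF id m₂) {z | z.re < 1} :=
    ProbabilityTheory.analyticOnNhd_complexMGF.mono fun z hz => k₂ hz
  have hreal : ∀ τ < (1 : ℝ), ProbabilityTheory.complexMGF id m₁ (τ : ℂ) =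
      ProbabilityTheory.complexMGF id m₂ (τ : ℂ) := by
    intro τ hτ
    rw [ProbabilityTheory.complexMGF_ofReal, ProbabilityTheory.complexMGF_ofReal]
    congr 1
    simp only [ProbabilityTheory.mgf, id]
    rw [integral_eq_lintegral_of_nonneg_ae (ae_of_all _ fun t => (Real.exp_pos _).le) (by fun_prop),
      integral_eq_lintegral_of_nonneg_ae (ae_of_all _ fun t => (Real.exp_pos _).le) (by fun_prop),
      h τ hτ]
  have heq : EqOn (ProbabilityTheory.complexMGF id m₁) (ProbabilityTheory.complexMGF id m₂)
      {z | z.re < 1} := by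
    refine hA₁.eqOn_of_preconnected_of_frequently_eq hA₂ (z₀ := 0)
      (convex_halfSpace_re_lt 1).isPreconnected (by simp) ?_
    have ht : Tendsto (fun n : ℕ => ((-(1 / ((n : ℝ) + 1)) : ℝ) : ℂ)) atTop (𝓝[≠] 0) := by
      refine tendsto_nhdsWithin_iff.mpr ⟨?_, Eventually.of_forall fun n => ?_⟩
      · have := (tendsto_one_div_add_atTop_nhds_zero_nat (𝕜 := ℝ)).neg
        rw [neg_zero] at this
        exact_mod_cast (Complex.continuous_ofReal.tendsto 0).comp this
      · have : (-(1 / ((n : ℝ) + 1))) ≠ 0 := neg_ne_zero.mpr (by positivity)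
        exact Complex.ofReal_ne_zero.mpr this
    refine ht.frequently (Frequently.of_forall fun n => hreal _ ?_)
    have : 0 < 1 / ((n : ℝ) + 1) := by positivity
    linarith
  refine Measure.ext_of_charFun (funext fun t => ?_)
  have := heq (show (t * Complex.I : ℂ) ∈ {z : ℂ | z.re < 1} by simp)
  simpa only [ProbabilityTheory.complexMGF_id_mul_I] using this

lemma ae_eq_of_laplace {g₁ g₂ : ℝ → ENNReal} (hg₁ : Measurable g₁) (hg₂ : Measurable g₂)
    (h : ∀ s > (1 : ℝ), ∫⁻ t in Ioi 0, ENNReal.ofReal (Real.exp (-s * t)) * g₁ t =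
      ∫⁻ t in Ioi 0, ENNReal.ofReal (Real.exp (-s * t)) * g₂ t)
    (hfin : ∀ s > (1 : ℝ), ∫⁻ t in Ioi 0, ENNReal.ofReal (Real.exp (-s * t)) * g₂ t ≠ ⊤) :
    g₁ =ᵐ[volume.restrict (Ioi 0)] g₂ := by
  -- the tilt `e^{-2t}` makes both measures finite
  set w : ℝ → ENNReal := fun t => ENNReal.ofReal (Real.exp (-2 * t)) with hw
  have hwm : Measurable w := by fun_prop
  have hmom (g : ℝ → ENNReal) (hg : Measurable g) (τ : ℝ) :
      ∫⁻ t, ENNReal.ofReal (Real.exp (τ * t)) ∂((volume.restrict (Ioi 0)).withDensity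
        (fun t => w t * g t)) =
      ∫⁻ t in Ioi 0, ENNReal.ofReal (Real.exp (-(2 - τ) * t)) * g t := by
    rw [lintegral_withDensity_eq_lintegral_mul _ (by fun_prop) (by fun_prop)]
    refine lintegral_congr fun t => ?_
    simp only [Pi.mul_apply, hw]
    rw [mul_right_comm, ← ENNReal.ofReal_mul (Real.exp_pos _).le, ← Real.exp_add]
    congr 3; ring_nf
  have hmass (g : ℝ → ENNReal) (hf : ∫⁻ t in Ioi 0, ENNReal.ofReal (Real.exp (-2 * t)) * g t ≠ ⊤) :
      IsFiniteMeasure ((volume.restrict (Ioi 0)).withDensity (fun t => w t * g t)) :=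
    isFiniteMeasure_withDensity hf
  have f₂ := hfin 2 (by norm_num)
  have f₁ : ∫⁻ t in Ioi 0, ENNReal.ofReal (Real.exp (-2 * t)) * g₁ t ≠ ⊤ := by
    rw [h 2 (by norm_num)]; exact f₂
  have := hmass g₁ f₁
  have := hmass g₂ f₂
  have heq := measure_ext_of_exp_moments
    (m₁ := (volume.restrict (Ioi 0)).withDensity (fun t => w t * g₁ t))
    (m₂ := (volume.restrict (Ioi 0)).withDensity (fun t => w t * g₂ t))
    (fun τ hτ => by rw [hmom g₁ hg₁, hmom g₂ hg₂]; exact h _ (by linarith))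
    (fun τ hτ => by rw [hmom g₂ hg₂]; exact hfin _ (by linarith))
  rw [withDensity_eq_iff_of_sigmaFinite (by fun_prop) (by fun_prop)] at heq
  filter_upwards [heq] with t ht
  refine (ENNReal.mul_right_inj (a := w t) ?_ ENNReal.ofReal_ne_top).mp ht
  simp only [hw, ne_eq, ENNReal.ofReal_eq_zero, not_le]
  exact Real.exp_pos _


/-! ### Laplace transforms of the three terms of the representation -/

/-- Positivity of the kernel upgrades the improper integral to a Lebesgue integral. -/
lemma lintegral_stieltjes {ν μ : ℝ} (hν : 0 < ν) (hν2 : ν < 2) (hν1 : ν ≠ 1) (h1 : 1 ≤ μ)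
    (h2 : μ ≤ 2) (h3 : ν ≤ μ) (h4 : μ < 1 + ν) {s : ℝ} (hs : 1 < s) :
    0 ≤ 1 / (ν * (s - 1)) - s ^ (ν - μ) / (s ^ ν - 1) ∧
    ∫⁻ x, ENNReal.ofReal (mlKernel ν μ x / (Real.exp x + s)) =
      ENNReal.ofReal (1 / (ν * (s - 1)) - s ^ (ν - μ) / (s ^ ν - 1)) := by
  have hs0 : 0 < s := by linarith
  have hlog : 0 < Real.log s := Real.log_pos hs
  have ht := stieltjes_tendsto hν hν2 hν1 (by linarith) h4 hlog
  rw [Real.exp_log hs0, mul_comm _ (Real.log s), ← Real.rpow_def_of_pos hs0, mul_comm _ (Real.log s),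
    ← Real.rpow_def_of_pos hs0] at ht
  have hpos (x : ℝ) : 0 ≤ mlKernel ν μ x / (Real.exp x + s) := by
    have := mlKernel_pos hν hν2 hν1 h1 h2 h3 h4 x
    positivity
  have hcont : Continuous fun x => mlKernel ν μ x / (Real.exp x + s) := by
    refine (mlKernel_continuous hν hν2 hν1 μ).div (by fun_prop) fun x => ?_
    positivity
  have hint : Integrable fun x => mlKernel ν μ x / (Real.exp x + s) := by
    refine integrable_of_intervalIntegral_norm_tendsto _
      (fun T : ℝ => (hcont.integrableOn_Icc (a := -T) (b := T)).mono_set Ioc_subset_Icc_self)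
      tendsto_neg_atTop_atBot tendsto_id (ht.congr fun T => ?_)
    refine intervalIntegral.integral_congr fun x _ => ?_
    simp only [Real.norm_eq_abs]
    exact (abs_of_nonneg (hpos x)).symm
  have hval := tendsto_nhds_unique
    (intervalIntegral_tendsto_integral hint tendsto_neg_atTop_atBot tendsto_id) ht
  refine ⟨hval ▸ integral_nonneg hpos, ?_⟩
  rw [← hval, ofReal_integral_eq_lintegral_ofReal hint (ae_of_all _ hpos)]

lemma lintegral_exp_neg {a : ℝ} (ha : 0 < a) :
    ∫⁻ t in Ioi 0, ENNReal.ofReal (Real.exp (-a * t)) = ENNReal.ofReal (1 / a) := by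
  rw [← ofReal_integral_eq_lintegral_ofReal (integrableOn_exp_mul_Ioi (by linarith) 0)
    (ae_of_all _ fun t => (Real.exp_pos _).le)]
  rw [integral_exp_mul_Ioi (by linarith)]
  simp

lemma laplace_exp {ν : ℝ} (hν : 0 < ν) {s : ℝ} (hs : 1 < s) :
    ∫⁻ t in Ioi 0, ENNReal.ofReal (Real.exp (-s * t)) * ENNReal.ofReal (Real.exp t / ν) =
      ENNReal.ofReal (1 / (ν * (s - 1))) := by
  have h (t : ℝ) : ENNReal.ofReal (Real.exp (-s * t)) * ENNReal.ofReal (Real.exp t / ν) =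
      ENNReal.ofReal (1 / ν) * ENNReal.ofReal (Real.exp (-(s - 1) * t)) := by
    rw [← ENNReal.ofReal_mul (Real.exp_pos _).le, ← ENNReal.ofReal_mul (by positivity),
      ← mul_div_assoc, ← Real.exp_add]
    congr 1
    rw [div_mul_eq_mul_div, one_mul]
    congr 2; ring
  simp_rw [h]
  rw [lintegral_const_mul _ (by fun_prop), lintegral_exp_neg (by linarith),
    ← ENNReal.ofReal_mul (by positivity)]
  congr 1
  field_simp

lemma laplace_kernel {κ : ℝ → ℝ} (hκ : Continuous κ) (hκ0 : ∀ x, 0 ≤ κ x) {s : ℝ} (hs : 0 < s) :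
    ∫⁻ t in Ioi 0, ENNReal.ofReal (Real.exp (-s * t)) *
        ∫⁻ x, ENNReal.ofReal (κ x * Real.exp (-t * Real.exp x)) =
      ∫⁻ x, ENNReal.ofReal (κ x / (Real.exp x + s)) := by
  have h (t : ℝ) : ENNReal.ofReal (Real.exp (-s * t)) *
        ∫⁻ x, ENNReal.ofReal (κ x * Real.exp (-t * Real.exp x)) =
      ∫⁻ x, ENNReal.ofReal (κ x) * ENNReal.ofReal (Real.exp (-(Real.exp x + s) * t)) := by
    rw [← lintegral_const_mul _ (by fun_prop)]
    refine lintegral_congr fun x => ?_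
    rw [← ENNReal.ofReal_mul (Real.exp_pos _).le, ← ENNReal.ofReal_mul (hκ0 x), mul_left_comm,
      ← Real.exp_add]
    congr 3; ring
  simp_rw [h]
  rw [lintegral_lintegral_swap (by fun_prop)]
  refine lintegral_congr fun x => ?_
  rw [lintegral_const_mul _ (by fun_prop), lintegral_exp_neg (by positivity),
    ← ENNReal.ofReal_mul (hκ0 x), mul_one_div]

/-- `t^{μ-1} E_{ν,μ}(t^ν)` has Laplace transform `s^{ν-μ}/(s^ν-1)`. -/
lemma laplace_ml {ν μ : ℝ} (hν : 0 < ν) (hμ : 0 < μ) {s : ℝ} (hs : 1 < s) :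
    ∫⁻ t in Ioi 0, ENNReal.ofReal (Real.exp (-s * t)) *
        ENNReal.ofReal (t ^ (μ - 1) * ∑' n : ℕ, (t ^ ν) ^ n / Real.Gamma (μ + ν * n)) =
      ENNReal.ofReal (s ^ (ν - μ) / (s ^ ν - 1)) := by
  have hs0 : 0 < s := by linarith
  have hterm : ∀ t ∈ Ioi (0 : ℝ), ENNReal.ofReal (Real.exp (-s * t)) *
        ENNReal.ofReal (t ^ (μ - 1) * ∑' n : ℕ, (t ^ ν) ^ n / Real.Gamma (μ + ν * n)) =
      ∑' n : ℕ, ENNReal.ofReal (1 / Real.Gamma (μ + ν * n)) *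
        ENNReal.ofReal (t ^ (μ + ν * n - 1) * Real.exp (-(s * t))) := by
    intro t ht
    have ht : 0 < t := ht
    have hsum := ml_summable hν hμ (Real.rpow_nonneg ht.le ν)
    rw [← ENNReal.ofReal_mul (Real.exp_pos _).le, ← mul_assoc, ← tsum_mul_left,
      ENNReal.ofReal_tsum_of_nonneg _ (hsum.mul_left _)]
    · refine tsum_congr fun n => ?_
      have := ml_gamma_pos hν hμ n
      rw [← ENNReal.ofReal_mul (by positivity)]
      congr 1
      rw [← Real.rpow_natCast, ← Real.rpow_mul ht.le,
        show μ + ν * n - 1 = (μ - 1) + ν * n by ring, Real.rpow_add ht, neg_mul]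
      ring
    · intro n
      have := ml_gamma_pos hν hμ n
      positivity
  rw [setLIntegral_congr_fun measurableSet_Ioi hterm, lintegral_tsum (fun n => by fun_prop)]
  have hval (n : ℕ) : ∫⁻ t in Ioi 0, ENNReal.ofReal (1 / Real.Gamma (μ + ν * n)) *
        ENNReal.ofReal (t ^ (μ + ν * n - 1) * Real.exp (-(s * t))) =
      ENNReal.ofReal (s ^ (-μ) * (s ^ (-ν)) ^ n) := by
    have hg := ml_gamma_pos hν hμ n
    have ha : 0 < μ + ν * n := by positivity
    have hI := Real.integral_rpow_mul_exp_neg_mul_Ioi ha hs0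
    have hint : IntegrableOn (fun t : ℝ => t ^ (μ + ν * n - 1) * Real.exp (-(s * t))) (Ioi 0) := by
      refine Integrable.of_integral_ne_zero ?_
      rw [hI]; positivity
    rw [lintegral_const_mul _ (by fun_prop), ← ofReal_integral_eq_lintegral_ofReal hint, hI,
      ← ENNReal.ofReal_mul (by positivity)]
    · congr 1
      rw [← Real.rpow_natCast, ← Real.rpow_mul hs0.le, ← Real.rpow_add hs0, one_div s,
        Real.inv_rpow hs0.le, ← Real.rpow_neg hs0.le]
      rw [show -(μ + ν * (n : ℝ)) = -μ + -ν * n by ring]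
      field_simp
    · filter_upwards [ae_restrict_mem measurableSet_Ioi] with t ht
      have ht : 0 < t := ht
      positivity
  simp_rw [hval]
  have hr0 : 0 ≤ s ^ (-ν) := by positivity
  have hr1 : s ^ (-ν) < 1 := Real.rpow_lt_one_of_one_lt_of_neg hs (by linarith)
  rw [← ENNReal.ofReal_tsum_of_nonneg (fun n => by positivity)
    ((summable_geometric_of_lt_one hr0 hr1).mul_left _), tsum_mul_left,
    tsum_geometric_of_lt_one hr0 hr1]
  congr 1
  have h1 : 1 < s ^ ν := Real.one_lt_rpow hs hν
  have h2 : s ^ ν - 1 ≠ 0 := by linarith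
  rw [Real.rpow_neg hs0.le, Real.rpow_neg hs0.le, Real.rpow_sub hs0]
  field_simp

/-! ### The integral representation in the right half-plane -/

lemma exists_mem_Ioo_of_ae {P : ℝ → Prop} (h : ∀ᵐ t ∂volume.restrict (Ioi (0 : ℝ)), P t)
    {a b : ℝ} (ha : 0 ≤ a) (hab : a < b) : ∃ t ∈ Ioo a b, P t := by
  have h' : ∀ᵐ t ∂volume.restrict (Ioo a b), P t :=
    ae_restrict_of_ae_restrict_of_subset (fun t ht => lt_of_le_of_lt ha ht.1) h
  have hne : (volume.restrict (Ioo a b)) ≠ 0 := by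
    rw [ne_eq, Measure.restrict_eq_zero]
    simp [hab]
  have : NeBot (ae (volume.restrict (Ioo a b))) := ae_neBot.mpr hne
  obtain ⟨t, ht, hP⟩ := ((ae_restrict_mem (μ := volume) measurableSet_Ioo).and h').exists
  exact ⟨t, ht, hP⟩

/-- The representation for almost every positive real argument. -/
lemma representation_ae {ν μ : ℝ} (hν : 0 < ν) (hν2 : ν < 2) (hν1 : ν ≠ 1) (h1 : 1 ≤ μ)
    (h2 : μ ≤ 2) (h3 : ν ≤ μ) (h4 : μ < 1 + ν) :
    ∀ᵐ t ∂volume.restrict (Ioi (0 : ℝ)),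
      ENNReal.ofReal (t ^ (μ - 1) * ∑' n : ℕ, (t ^ ν) ^ n / Real.Gamma (μ + ν * n)) +
        ∫⁻ x, ENNReal.ofReal (mlKernel ν μ x * Real.exp (-t * Real.exp x)) =
      ENNReal.ofReal (Real.exp t / ν) := by
  have hμ : 0 < μ := by linarith
  have hκ := mlKernel_continuous hν hν2 hν1 μ
  have hκ0 := fun x => (mlKernel_pos hν hν2 hν1 h1 h2 h3 h4 x).le
  have hm1 : Measurable fun t : ℝ =>
      ENNReal.ofReal (t ^ (μ - 1) * ∑' n : ℕ, (t ^ ν) ^ n / Real.Gamma (μ + ν * n)) := by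
    have : Measurable fun t : ℝ => ∑' n : ℕ, (t ^ ν) ^ n / Real.Gamma (μ + ν * n) := by
      have hc : (fun t : ℝ => ∑' n : ℕ, (t ^ ν) ^ n / Real.Gamma (μ + ν * n)) =
          fun t : ℝ => (mittagLeffler ν μ ((t ^ ν : ℝ) : ℂ)).re := by
        funext t; rw [ml_ofReal, Complex.ofReal_re]
      rw [hc]
      exact Complex.measurable_re.comp ((ml_differentiable hν hμ).continuous.measurable.comp
        (by fun_prop))
    fun_prop
  have hm2 : Measurable fun t : ℝ =>
      ∫⁻ x, ENNReal.ofReal (mlKernel ν μ x * Real.exp (-t * Real.exp x)) := by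
    refine Measurable.lintegral_prod_right' (f := fun p : ℝ × ℝ =>
      ENNReal.ofReal (mlKernel ν μ p.2 * Real.exp (-p.1 * Real.exp p.2))) ?_
    have := hκ.measurable
    fun_prop
  refine ae_eq_of_laplace (hm1.add hm2) (by fun_prop) (fun s hs => ?_) (fun s hs => ?_)
  · obtain ⟨hnn, hst⟩ := lintegral_stieltjes hν hν2 hν1 h1 h2 h3 h4 hs
    simp only [mul_add]
    rw [lintegral_add_left (by fun_prop), laplace_ml hν hμ hs, laplace_exp hν hs,
      laplace_kernel hκ hκ0 (by linarith), hst, ← ENNReal.ofReal_add _ hnn]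
    · congr 1; ring
    · have : 1 < s ^ ν := Real.one_lt_rpow hs hν
      have h0 : 0 < s := by linarith
      have : 0 < s ^ ν - 1 := by linarith
      positivity
  · rw [laplace_exp hν hs]; exact ENNReal.ofReal_ne_top

/-- Integrability and a bound for the mass of the kernel, by Fatou's lemma as `t → 0⁺` in the
representation. For `μ = 1` the term `t^{μ-1} E_{ν,μ}(t^ν)` is at least `1`, which improves the
bound to `1/ν - 1`. -/
lemma mlKernel_integrable {ν μ : ℝ} (hν : 0 < ν) (hν2 : ν < 2) (hν1 : ν ≠ 1) (h1 : 1 ≤ μ)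
    (h2 : μ ≤ 2) (h3 : ν ≤ μ) (h4 : μ < 1 + ν) :
    Integrable (mlKernel ν μ) ∧
      ∫ x, mlKernel ν μ x ≤ 1 / ν - (if μ = 1 then 1 else 0) := by
  have hμ : 0 < μ := by linarith
  have hκ := mlKernel_continuous hν hν2 hν1 μ
  have hκ0 := fun x => (mlKernel_pos hν hν2 hν1 h1 h2 h3 h4 x).le
  have hae := representation_ae hν hν2 hν1 h1 h2 h3 h4
  set b : ℝ := if μ = 1 then 1 else 0 with hb
  have hfb (t : ℝ) (ht : 0 < t) :
      b ≤ t ^ (μ - 1) * ∑' n : ℕ, (t ^ ν) ^ n / Real.Gamma (μ + ν * n) := by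
    have hge := ml_real_ge hν hμ (Real.rpow_nonneg ht.le ν)
    rw [hb]
    split_ifs with h
    · subst h
      simpa using hge
    · have : 0 < Real.Gamma μ := Real.Gamma_pos_of_pos hμ
      have : 0 ≤ 1 / Real.Gamma μ := by positivity
      exact mul_nonneg (Real.rpow_nonneg ht.le _) (this.trans hge)
  have hbound : ∀ᵐ t ∂volume.restrict (Ioi (0 : ℝ)),
      ∫⁻ x, ENNReal.ofReal (mlKernel ν μ x * Real.exp (-t * Real.exp x)) ≤
        ENNReal.ofReal (Real.exp t / ν - b) := by
    filter_upwards [hae, ae_restrict_mem measurableSet_Ioi] with t ht ht0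
    have hb0 : 0 ≤ b := by rw [hb]; split_ifs <;> norm_num
    rw [ENNReal.ofReal_sub _ hb0, ← ht]
    refine ENNReal.le_sub_of_add_le_left ENNReal.ofReal_ne_top ?_
    gcongr
    exact hfb t ht0
  have hseq (n : ℕ) := exists_mem_Ioo_of_ae hbound le_rfl
    (show (0 : ℝ) < 1 / ((n : ℝ) + 1) by positivity)
  choose t htI ht using hseq
  have htlim : Tendsto t atTop (𝓝 0) :=
    tendsto_of_tendsto_of_tendsto_of_le_of_le tendsto_const_nhds
      tendsto_one_div_add_atTop_nhds_zero_nat (fun n => (htI n).1.le) (fun n => (htI n).2.le)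
  have hfatou : ∫⁻ x, ENNReal.ofReal (mlKernel ν μ x) ≤ ENNReal.ofReal (1 / ν - b) := by
    have hlim (x : ℝ) : Tendsto (fun n =>
        ENNReal.ofReal (mlKernel ν μ x * Real.exp (-t n * Real.exp x))) atTop
        (𝓝 (ENNReal.ofReal (mlKernel ν μ x))) := by
      refine ENNReal.tendsto_ofReal ?_
      have hc : Continuous fun r : ℝ => mlKernel ν μ x * Real.exp (-r * Real.exp x) := by fun_prop
      simpa [Function.comp_def] using (hc.tendsto 0).comp htlim
    have hlim2 : Tendsto (fun n => ENNReal.ofReal (Real.exp (t n) / ν - b)) atTop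
        (𝓝 (ENNReal.ofReal (1 / ν - b))) := by
      refine ENNReal.tendsto_ofReal ?_
      have hc : Continuous fun r : ℝ => Real.exp r / ν - b := by fun_prop
      simpa [Function.comp_def] using (hc.tendsto 0).comp htlim
    calc ∫⁻ x, ENNReal.ofReal (mlKernel ν μ x)
        = ∫⁻ x, liminf (fun n =>
            ENNReal.ofReal (mlKernel ν μ x * Real.exp (-t n * Real.exp x))) atTop :=
          lintegral_congr fun x => (hlim x).liminf_eq.symm
      _ ≤ liminf (fun n => ∫⁻ x,
            ENNReal.ofReal (mlKernel ν μ x * Real.exp (-t n * Real.exp x))) atTop :=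
          lintegral_liminf_le fun n => by
            have := hκ.measurable
            fun_prop
      _ ≤ liminf (fun n => ENNReal.ofReal (Real.exp (t n) / ν - b)) atTop :=
          liminf_le_liminf (Eventually.of_forall ht)
      _ = _ := hlim2.liminf_eq
  have hint : Integrable (mlKernel ν μ) := by
    refine ⟨hκ.aestronglyMeasurable, ?_⟩
    rw [hasFiniteIntegral_iff_ofReal (ae_of_all _ hκ0)]
    exact hfatou.trans_lt ENNReal.ofReal_lt_top
  refine ⟨hint, ?_⟩
  rw [← ofReal_integral_eq_lintegral_ofReal hint (ae_of_all _ hκ0)] at hfatou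
  have hpos : 0 < ∫ x, mlKernel ν μ x := by
    rw [integral_pos_iff_support_of_nonneg hκ0 hint]
    have : Function.support (mlKernel ν μ) = univ := by
      ext x; simpa using (mlKernel_pos hν hν2 hν1 h1 h2 h3 h4 x).ne'
    rw [this]; simp
  rcases le_or_gt 0 (1 / ν - b) with h | h
  · exact (ENNReal.ofReal_le_ofReal_iff h).mp hfatou
  · rw [ENNReal.ofReal_of_nonpos h.le, nonpos_iff_eq_zero, ENNReal.ofReal_eq_zero] at hfatou
    linarith

/-- For an integrable kernel, `∫ κ(x) e^{-w eˣ} dx` is analytic in the open right half-plane. -/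
lemma kernel_transform_analytic {κ : ℝ → ℝ} (hκ : Continuous κ) (hκ0 : ∀ x, 0 ≤ κ x)
    (hint : Integrable κ) :
    AnalyticOnNhd ℂ (fun w : ℂ => ∫ x, (κ x : ℂ) * Complex.exp (-w * Real.exp x)) {w | 0 < w.re} := by
  set m : Measure ℝ := volume.withDensity (fun x => ((κ x).toNNReal : ENNReal)) with hm
  set Y : ℝ → ℝ := fun x => -Real.exp x with hY
  have hfin : IsFiniteMeasure m := isFiniteMeasure_withDensity_ofReal hint.2
  have hset : {w : ℂ | 0 < w.re} ⊆ {w | w.re ∈ interior (ProbabilityTheory.integrableExpSet Y m)} := by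
    have : Ioi (0 : ℝ) ⊆ interior (ProbabilityTheory.integrableExpSet Y m) := by
      refine interior_maximal (fun τ hτ => ?_) isOpen_Ioi
      have hτ : 0 < τ := hτ
      refine Integrable.mono' (integrable_const (1 : ℝ)) (by fun_prop) (ae_of_all _ fun x => ?_)
      rw [Real.norm_eq_abs, abs_of_pos (Real.exp_pos _), Real.exp_le_one_iff, hY]
      have := Real.exp_pos x
      nlinarith
    exact fun w hw => this hw
  have hA : AnalyticOnNhd ℂ (ProbabilityTheory.complexMGF Y m) {w | 0 < w.re} :=
    ProbabilityTheory.analyticOnNhd_complexMGF.mono hset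
  convert hA using 1
  funext w
  rw [ProbabilityTheory.complexMGF, hm, integral_withDensity_eq_integral_smul (by fun_prop)]
  refine integral_congr_ae (ae_of_all _ fun x => ?_)
  simp only [NNReal.smul_def, Real.coe_toNNReal _ (hκ0 x), Complex.real_smul, hY]
  congr 2; push_cast; ring

lemma kernel_transform_continuousOn {κ : ℝ → ℝ} (hκ : Continuous κ) (hint : Integrable κ) :
    ContinuousOn (fun w : ℂ => ∫ x, (κ x : ℂ) * Complex.exp (-w * Real.exp x)) {w | 0 ≤ w.re} := by
  refine continuousOn_of_dominated (bound := fun x => |κ x|) (fun w _ => by fun_prop)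
    (fun w hw => ae_of_all _ fun x => ?_) hint.abs (ae_of_all _ fun x => by fun_prop)
  rw [norm_mul, Complex.norm_real, Complex.norm_exp, Real.norm_eq_abs]
  refine mul_le_of_le_one_right (abs_nonneg _) (Real.exp_le_one_iff.mpr ?_)
  have hw : 0 ≤ w.re := hw
  rw [neg_mul, Complex.neg_re, Complex.re_mul_ofReal]
  have := Real.exp_pos x
  nlinarith

/-- The integral representation of the Mittag-Leffler function in the closed right half-plane:
analytic continuation from almost every `t > 0`, then continuity up to the imaginary axis. -/
lemma mlKernel_representation {ν μ : ℝ} (hν : 0 < ν) (hν2 : ν < 2) (hν1 : ν ≠ 1) (h1 : 1 ≤ μ)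
    (h2 : μ ≤ 2) (h3 : ν ≤ μ) (h4 : μ < 1 + ν) {w : ℂ} (hw : 0 ≤ w.re) (hw0 : w ≠ 0) :
    w ^ ((μ - 1 : ℝ) : ℂ) * mittagLeffler ν μ (w ^ (ν : ℂ)) =
      Complex.exp w / ν - ∫ x, (mlKernel ν μ x : ℂ) * Complex.exp (-w * Real.exp x) := by
  have hμ : 0 < μ := by linarith
  have hκ := mlKernel_continuous hν hν2 hν1 μ
  have hκ0 := fun x => (mlKernel_pos hν hν2 hν1 h1 h2 h3 h4 x).le
  have hint := (mlKernel_integrable hν hν2 hν1 h1 h2 h3 h4).1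
  have hae := representation_ae hν hν2 hν1 h1 h2 h3 h4
  set L : ℂ → ℂ := fun w => w ^ ((μ - 1 : ℝ) : ℂ) * mittagLeffler ν μ (w ^ (ν : ℂ)) with hL
  set G : ℂ → ℂ := fun w => ∫ x, (mlKernel ν μ x : ℂ) * Complex.exp (-w * Real.exp x) with hG
  have hslit : ∀ w : ℂ, 0 ≤ w.re → w ≠ 0 → w ∈ Complex.slitPlane := by
    intro w hw hw0
    rw [Complex.mem_slitPlane_iff]
    by_contra! h
    exact hw0 (Complex.ext (le_antisymm h.1 hw) h.2)
  have hLd : ∀ w ∈ Complex.slitPlane, DifferentiableAt ℂ L w := by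
    intro w hw
    refine DifferentiableAt.mul ?_ ((ml_differentiable hν hμ).differentiableAt.comp w ?_)
    · exact DifferentiableAt.cpow_const differentiableAt_id hw
    · exact DifferentiableAt.cpow_const differentiableAt_id hw
  have hopen : IsOpen {w : ℂ | 0 < w.re} := isOpen_lt (by fun_prop) (by fun_prop)
  have hLa : AnalyticOnNhd ℂ L {w | 0 < w.re} := by
    refine DifferentiableOn.analyticOnNhd (fun w hw => ?_) hopen
    have hw : 0 < w.re := hw
    exact (hLd w (Or.inl hw)).differentiableWithinAt
  have hRa : AnalyticOnNhd ℂ (fun w => Complex.exp w / ν - G w) {w | 0 < w.re} := by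
    refine AnalyticOnNhd.sub ?_ (kernel_transform_analytic hκ hκ0 hint)
    exact DifferentiableOn.analyticOnNhd
      (Complex.differentiable_exp.div_const _).differentiableOn hopen
  have hreal : ∀ᵐ (t : ℝ) ∂volume.restrict (Ioi (0 : ℝ)), L (t : ℂ) = Complex.exp t / ν - G t := by
    filter_upwards [hae, ae_restrict_mem measurableSet_Ioi] with t ht ht0
    have ht0 : 0 < t := ht0
    have hLt : L t = ((t ^ (μ - 1) * ∑' n : ℕ, (t ^ ν) ^ n / Real.Gamma (μ + ν * n) : ℝ) : ℂ) := by
      simp only [hL]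
      rw [← Complex.ofReal_cpow ht0.le, ← Complex.ofReal_cpow ht0.le, ml_ofReal, Complex.ofReal_mul]
    have hgi : Integrable fun x => mlKernel ν μ x * Real.exp (-t * Real.exp x) := by
      refine hint.mono' (by fun_prop) (ae_of_all _ fun x => ?_)
      rw [Real.norm_eq_abs, abs_of_nonneg (mul_nonneg (hκ0 x) (Real.exp_pos _).le)]
      refine mul_le_of_le_one_right (hκ0 x) (Real.exp_le_one_iff.mpr ?_)
      have := Real.exp_pos x
      nlinarith
    have hGt : G t = ((∫ x, mlKernel ν μ x * Real.exp (-t * Real.exp x) : ℝ) : ℂ) := by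
      simp only [hG]
      rw [← integral_complex_ofReal]
      refine integral_congr_ae (ae_of_all _ fun x => ?_)
      push_cast; rfl
    have hf0 : 0 ≤ t ^ (μ - 1) * ∑' n : ℕ, (t ^ ν) ^ n / Real.Gamma (μ + ν * n) := by
      have hge := ml_real_ge hν hμ (Real.rpow_nonneg ht0.le ν)
      have : 0 < Real.Gamma μ := Real.Gamma_pos_of_pos hμ
      have : 0 ≤ 1 / Real.Gamma μ := by positivity
      exact mul_nonneg (Real.rpow_nonneg ht0.le _) (this.trans hge)
    have hg0 : ∀ x, 0 ≤ mlKernel ν μ x * Real.exp (-t * Real.exp x) := fun x =>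
      mul_nonneg (hκ0 x) (Real.exp_pos _).le
    rw [← ofReal_integral_eq_lintegral_ofReal hgi (ae_of_all _ hg0),
      ← ENNReal.ofReal_add hf0 (integral_nonneg hg0),
      ENNReal.ofReal_eq_ofReal_iff (add_nonneg hf0 (integral_nonneg hg0)) (by positivity)] at ht
    rw [hLt, hGt, eq_sub_iff_add_eq]
    exact_mod_cast ht
  have heq : EqOn L (fun w => Complex.exp w / ν - G w) {w | 0 < w.re} := by
    refine hLa.eqOn_of_preconnected_of_frequently_eq hRa (z₀ := 1)
      (convex_halfSpace_re_gt 0).isPreconnected (by simp) ?_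
    have hseq (n : ℕ) := exists_mem_Ioo_of_ae hreal zero_le_one
      (show (1 : ℝ) < 1 + 1 / ((n : ℝ) + 1) by
        have : 0 < 1 / ((n : ℝ) + 1) := by positivity
        linarith)
    choose t htI ht using hseq
    have htlim : Tendsto t atTop (𝓝 1) := by
      refine tendsto_of_tendsto_of_tendsto_of_le_of_le tendsto_const_nhds ?_
        (fun n => (htI n).1.le) (fun n => (htI n).2.le)
      simpa using (tendsto_one_div_add_atTop_nhds_zero_nat (𝕜 := ℝ)).const_add 1
    have htlim' : Tendsto (fun n => (t n : ℂ)) atTop (𝓝[≠] 1) := by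
      refine tendsto_nhdsWithin_iff.mpr ⟨?_, Eventually.of_forall fun n => ?_⟩
      · exact_mod_cast (Complex.continuous_ofReal.tendsto 1).comp htlim
      · have := (htI n).1.ne'
        rw [mem_compl_iff, mem_singleton_iff]
        exact_mod_cast this
    exact htlim'.frequently (Frequently.of_forall ht)
  -- extension to the imaginary axis by continuity
  have hpath : Tendsto (fun n : ℕ => w + ((1 / ((n : ℝ) + 1) : ℝ) : ℂ)) atTop
      (𝓝[{w | 0 ≤ w.re}] w) := by
    refine tendsto_nhdsWithin_iff.mpr ⟨?_, Eventually.of_forall fun n => ?_⟩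
    · have := (Complex.continuous_ofReal.tendsto 0).comp
        (tendsto_one_div_add_atTop_nhds_zero_nat (𝕜 := ℝ))
      simpa using this.const_add w
    · have : 0 < 1 / ((n : ℝ) + 1) := by positivity
      change 0 ≤ (w + ((1 / ((n : ℝ) + 1) : ℝ) : ℂ)).re
      rw [Complex.add_re, Complex.ofReal_re]; linarith
  have hc1 : ContinuousWithinAt L {w | 0 ≤ w.re} w :=
    (hLd w (hslit w hw hw0)).continuousAt.continuousWithinAt
  have hc2 : ContinuousWithinAt (fun w => Complex.exp w / ν - G w) {w | 0 ≤ w.re} w :=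
    ContinuousWithinAt.sub (Continuous.continuousWithinAt (by fun_prop))
      (kernel_transform_continuousOn hκ hint w hw)
  refine tendsto_nhds_unique (hc1.tendsto.comp hpath) ((hc2.tendsto.comp hpath).congr fun n => ?_)
  refine (heq ?_).symm
  have : 0 < 1 / ((n : ℝ) + 1) := by positivity
  change 0 < (w + ((1 / ((n : ℝ) + 1) : ℝ) : ℂ)).re
  rw [Complex.add_re, Complex.ofReal_re]; linarith

/-! ### Bounds for the transform of a positive kernel -/

lemma kernel_transform_ofReal (κ : ℝ → ℝ) (t : ℝ) :
    ∫ x, (κ x : ℂ) * Complex.exp (-(t : ℂ) * Real.exp x) =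
      ((∫ x, κ x * Real.exp (-t * Real.exp x) : ℝ) : ℂ) := by
  rw [← integral_complex_ofReal]
  refine integral_congr_ae (ae_of_all _ fun x => ?_)
  push_cast; rfl

lemma kernel_transform_norm_le {κ : ℝ → ℝ} (hκ0 : ∀ x, 0 ≤ κ x) (w : ℂ) :
    ‖∫ x, (κ x : ℂ) * Complex.exp (-w * Real.exp x)‖ ≤
      ∫ x, κ x * Real.exp (-w.re * Real.exp x) := by
  refine (norm_integral_le_integral_norm _).trans_eq ?_
  refine integral_congr_ae (ae_of_all _ fun x => ?_)
  simp only
  rw [norm_mul, Complex.norm_real, Complex.norm_exp, Real.norm_eq_abs, abs_of_nonneg (hκ0 x),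
    Complex.re_mul_ofReal, Complex.neg_re]

/-- Splitting off a multiple of `eˣ` on `[0, log 2]`, where the transform can be computed, yields
a bound for the transform strictly below the total mass of the kernel. -/
lemma kernel_transform_gap {κ : ℝ → ℝ} (hκ : Continuous κ) (hκ0 : ∀ x, 0 < κ x)
    (hint : Integrable κ) :
    ∃ c > 0, ∀ w : ℂ, 0 ≤ w.re → w ≠ 0 →
      ‖∫ x, (κ x : ℂ) * Complex.exp (-w * Real.exp x)‖ ≤
        (∫ x, κ x) - c * (1 - ‖(Complex.exp (-w) - Complex.exp (-2 * w)) / w‖) := by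
  have hl2 : 0 < Real.log 2 := Real.log_pos (by norm_num)
  obtain ⟨x₁, -, hx₁⟩ := (isCompact_Icc (a := (0 : ℝ)) (b := Real.log 2)).exists_isMinOn
    ⟨0, left_mem_Icc.mpr hl2.le⟩ (f := fun x => κ x / Real.exp x)
    (hκ.div Real.continuous_exp fun x => (Real.exp_pos x).ne').continuousOn
  set c := κ x₁ / Real.exp x₁ with hc
  have hc0 : 0 < c := div_pos (hκ0 _) (Real.exp_pos _)
  have hcle : ∀ x ∈ Ioc 0 (Real.log 2), c * Real.exp x ≤ κ x := fun x hx =>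
    (le_div_iff₀ (Real.exp_pos x)).mp (hx₁ (Ioc_subset_Icc_self hx))
  refine ⟨c, hc0, fun w hw hw0 => ?_⟩
  set h : ℝ → ℝ := (Ioc 0 (Real.log 2)).indicator fun x => c * Real.exp x with hh
  have hhint : Integrable h := by
    rw [hh, integrable_indicator_iff measurableSet_Ioc]
    exact ((by fun_prop : Continuous fun x => c * Real.exp x).integrableOn_Icc).mono_set
      Ioc_subset_Icc_self
  have hhle (x : ℝ) : h x ≤ κ x := by
    rw [hh]
    by_cases hx : x ∈ Ioc 0 (Real.log 2)
    · rw [indicator_of_mem hx]; exact hcle x hx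
    · rw [indicator_of_notMem hx]; exact (hκ0 x).le
  have hhI : ∫ x, h x = c := by
    rw [hh, integral_indicator measurableSet_Ioc, ← intervalIntegral.integral_of_le hl2.le,
      intervalIntegral.integral_const_mul, integral_exp, Real.exp_log (by norm_num)]
    simp; norm_num
  have hexp (x : ℝ) : ‖Complex.exp (-w * Real.exp x)‖ ≤ 1 := by
    rw [Complex.norm_exp, Real.exp_le_one_iff, neg_mul, Complex.neg_re, Complex.re_mul_ofReal]
    have := Real.exp_pos x
    nlinarith
  have hi (g : ℝ → ℝ) (hg : Integrable g) :
      Integrable fun x => (g x : ℂ) * Complex.exp (-w * Real.exp x) := by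
    refine hg.ofReal.mul_bdd (c := 1) (by fun_prop) (ae_of_all _ hexp)
  have hhG : ∫ x, (h x : ℂ) * Complex.exp (-w * Real.exp x) =
      c * ((Complex.exp (-w) - Complex.exp (-2 * w)) / w) := by
    have e : (fun x => (h x : ℂ) * Complex.exp (-w * Real.exp x)) =
        (Ioc 0 (Real.log 2)).indicator
          fun x : ℝ => (c : ℂ) * ((Real.exp x : ℂ) * Complex.exp (-w * Real.exp x)) := by
      funext x
      rw [hh]
      by_cases hx : x ∈ Ioc 0 (Real.log 2)
      · rw [indicator_of_mem hx, indicator_of_mem hx]; push_cast; ring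
      · rw [indicator_of_notMem hx, indicator_of_notMem hx]; simp
    rw [e, integral_indicator measurableSet_Ioc, ← intervalIntegral.integral_of_le hl2.le,
      intervalIntegral.integral_const_mul]
    congr 1
    have hd (x : ℝ) : HasDerivAt (fun x : ℝ => -(Complex.exp (-w * Real.exp x)) / w)
        ((Real.exp x : ℂ) * Complex.exp (-w * Real.exp x)) x := by
      have h1 : HasDerivAt (fun x : ℝ => (Real.exp x : ℂ)) (Real.exp x : ℂ) x :=
        (Real.hasDerivAt_exp x).ofReal_comp
      refine (((h1.const_mul (-w)).cexp).neg.div_const w).congr_deriv ?_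
      field_simp
    rw [intervalIntegral.integral_eq_sub_of_hasDerivAt (fun x _ => hd x)
      (Continuous.intervalIntegrable (by fun_prop) _ _), Real.exp_log (by norm_num), Real.exp_zero]
    push_cast
    ring_nf
  have hsplit : ∫ x, (κ x : ℂ) * Complex.exp (-w * Real.exp x) =
      (∫ x, ((κ x - h x : ℝ) : ℂ) * Complex.exp (-w * Real.exp x)) +
        c * ((Complex.exp (-w) - Complex.exp (-2 * w)) / w) := by
    rw [← hhG, ← integral_add (hi (fun x => κ x - h x) (hint.sub hhint)) (hi _ hhint)]
    refine integral_congr_ae (ae_of_all _ fun x => ?_)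
    push_cast; ring
  have hfirst : ‖∫ x, ((κ x - h x : ℝ) : ℂ) * Complex.exp (-w * Real.exp x)‖ ≤
      (∫ x, κ x) - c := by
    rw [← hhI, ← integral_sub hint hhint]
    refine norm_integral_le_of_norm_le (hint.sub hhint) (ae_of_all _ fun x => ?_)
    rw [norm_mul, Complex.norm_real, Real.norm_eq_abs, abs_of_nonneg (sub_nonneg.mpr (hhle x))]
    exact mul_le_of_le_one_right (sub_nonneg.mpr (hhle x)) (hexp x)
  rw [hsplit]
  refine (norm_add_le _ _).trans ?_
  rw [norm_mul, Complex.norm_real, Real.norm_eq_abs, abs_of_pos hc0]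
  linarith

lemma kernel_transform_gap_large {κ : ℝ → ℝ} (hκ : Continuous κ) (hκ0 : ∀ x, 0 < κ x)
    (hint : Integrable κ) :
    ∃ c > 0, ∀ w : ℂ, 0 ≤ w.re → 4 ≤ ‖w‖ →
      ‖∫ x, (κ x : ℂ) * Complex.exp (-w * Real.exp x)‖ ≤ (∫ x, κ x) - c := by
  obtain ⟨c, hc, h⟩ := kernel_transform_gap hκ hκ0 hint
  refine ⟨c / 2, by positivity, fun w hw hw4 => (h w hw ?_).trans ?_⟩
  · rintro rfl; norm_num at hw4
  · have h1 : ‖Complex.exp (-w)‖ ≤ 1 := by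
      rw [Complex.norm_exp, Real.exp_le_one_iff]; simpa using hw
    have h2 : ‖Complex.exp (-2 * w)‖ ≤ 1 := by
      rw [Complex.norm_exp, Real.exp_le_one_iff]; simpa using hw
    have h3 : ‖(Complex.exp (-w) - Complex.exp (-2 * w)) / w‖ ≤ 1 / 2 := by
      rw [norm_div, div_le_iff₀ (by linarith)]
      have := norm_sub_le (Complex.exp (-w)) (Complex.exp (-2 * w))
      linarith
    nlinarith

/-- On the imaginary axis the transform is strictly smaller than the mass. -/
lemma kernel_transform_lt {κ : ℝ → ℝ} (hκ : Continuous κ) (hκ0 : ∀ x, 0 < κ x)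
    (hint : Integrable κ) {w : ℂ} (hw : w.re = 0) (hw0 : w ≠ 0) :
    ‖∫ x, (κ x : ℂ) * Complex.exp (-w * Real.exp x)‖ < ∫ x, κ x := by
  obtain ⟨c, hc, h⟩ := kernel_transform_gap hκ hκ0 hint
  refine (h w hw.ge hw0).trans_lt ?_
  have hwI : w = Complex.I * (w.im : ℂ) := by
    apply Complex.ext <;> simp [hw]
  have hy : w.im ≠ 0 := fun h0 => hw0 (by rw [hwI, h0]; simp)
  have h3 : ‖(Complex.exp (-w) - Complex.exp (-2 * w)) / w‖ < 1 := by
    have e : Complex.exp (-w) - Complex.exp (-2 * w) =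
        Complex.exp (-2 * w) * (Complex.exp w - 1) := by
      rw [mul_sub, ← Complex.exp_add]; ring_nf
    have n1 : ‖Complex.exp (-2 * w)‖ = 1 := by
      rw [Complex.norm_exp]; simp [hw]
    rw [e, norm_div, norm_mul, n1, one_mul, div_lt_one (norm_pos_iff.mpr hw0)]
    rw [hwI, Complex.norm_exp_I_mul_ofReal_sub_one, norm_mul, norm_mul, Complex.norm_I, one_mul,
      Complex.norm_real]
    have := Real.abs_sin_lt_abs (x := w.im / 2) (by simpa using hy)
    rw [abs_div] at this
    simp only [Real.norm_eq_abs] at this ⊢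
    norm_num at this ⊢
    linarith
  nlinarith

/-! ### Zero-free sectors from the representation -/

/-- The power map `w ↦ w ^ ν` carries the closed right half-plane onto the closed sector of
half-opening `πν/2`. -/
lemma sector_param {ν : ℝ} (hν : 0 < ν) {z : ℂ} (hz : z ≠ 0)
    (harg : |z.arg| ≤ Real.pi * ν / 2) :
    ∃ w : ℂ, 0 ≤ w.re ∧ w ≠ 0 ∧ w ^ (ν : ℂ) = z ∧ ‖w‖ = ‖z‖ ^ (1 / ν) := by
  have hpi := Real.pi_pos
  have hνc : (ν : ℂ) ≠ 0 := by exact_mod_cast hν.ne'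
  have him : (Complex.log z / ν).im = z.arg / ν := by
    rw [Complex.div_ofReal_im, Complex.log_im]
  have hre : (Complex.log z / ν).re = Real.log ‖z‖ / ν := by
    rw [Complex.div_ofReal_re, Complex.log_re]
  have hb : |z.arg / ν| ≤ Real.pi / 2 := by
    rw [abs_div, abs_of_pos hν, div_le_iff₀ hν]; linarith
  obtain ⟨hb1, hb2⟩ := abs_le.mp hb
  refine ⟨Complex.exp (Complex.log z / ν), ?_, Complex.exp_ne_zero _, ?_, ?_⟩
  · rw [Complex.exp_re, him]
    exact mul_nonneg (Real.exp_pos _).le (Real.cos_nonneg_of_neg_pi_div_two_le_of_le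
      (by linarith) (by linarith))
  · rw [Complex.cpow_def_of_ne_zero (Complex.exp_ne_zero _),
      Complex.log_exp (by rw [him]; linarith) (by rw [him]; linarith), div_mul_cancel₀ _ hνc,
      Complex.exp_log hz]
  · rw [Complex.norm_exp, hre, Real.rpow_def_of_pos (norm_pos_iff.mpr hz)]
    congr 1; ring

/-- The representation on the positive real axis. -/
lemma representation_real {ν μ : ℝ} (hν : 0 < ν) (hν2 : ν < 2) (hν1 : ν ≠ 1) (h1 : 1 ≤ μ)
    (h2 : μ ≤ 2) (h3 : ν ≤ μ) (h4 : μ < 1 + ν) {t : ℝ} (ht : 0 < t) :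
    t ^ (μ - 1) * ∑' n : ℕ, (t ^ ν) ^ n / Real.Gamma (μ + ν * n) =
      Real.exp t / ν - ∫ x, mlKernel ν μ x * Real.exp (-t * Real.exp x) := by
  have h := mlKernel_representation hν hν2 hν1 h1 h2 h3 h4 (w := (t : ℂ)) (by simpa using ht.le)
    (by exact_mod_cast ht.ne')
  rw [← Complex.ofReal_cpow ht.le, ← Complex.ofReal_cpow ht.le, ml_ofReal,
    kernel_transform_ofReal] at h
  exact_mod_cast h

lemma norm_exp_div (w : ℂ) {ν : ℝ} (hν : 0 < ν) : ‖Complex.exp w / ν‖ = Real.exp w.re / ν := by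
  rw [norm_div, Complex.norm_exp, Complex.norm_real, Real.norm_eq_abs, abs_of_pos hν]

lemma ml_zero_ne {ν μ : ℝ} (hν : 0 < ν) (hμ : 0 < μ) : mittagLeffler ν μ 0 ≠ 0 := by
  rw [ml_zero hν hμ]
  have := Real.Gamma_pos_of_pos hμ
  have : 1 / Real.Gamma μ ≠ 0 := by positivity
  exact_mod_cast this

/-- The range `1 ≤ μ ≤ 2`, `ν ≤ μ < 1 + ν`. Off the imaginary axis the transform of `κ` at `w` is
dominated by its value at `Re w`, which is smaller than `exp (Re w) / ν` because the Mittag-Leffler function is positive on `(0, ∞)`; on the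
axis it is strictly smaller than the mass of `κ`. -/
lemma ml_ne_zero_of_lt {ν μ : ℝ} (hν : 0 < ν) (hν2 : ν < 2) (hν1 : ν ≠ 1) (h1 : 1 ≤ μ)
    (h2 : μ ≤ 2) (h3 : ν ≤ μ) (h4 : μ < 1 + ν) {z : ℂ} (harg : |z.arg| ≤ Real.pi * ν / 2) :
    mittagLeffler ν μ z ≠ 0 := by
  have hμ : 0 < μ := by linarith
  have hκ := mlKernel_continuous hν hν2 hν1 μ
  have hκ0 := fun x => mlKernel_pos hν hν2 hν1 h1 h2 h3 h4 x
  obtain ⟨hint, hmass⟩ := mlKernel_integrable hν hν2 hν1 h1 h2 h3 h4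
  rcases eq_or_ne z 0 with rfl | hz
  · exact ml_zero_ne hν hμ
  obtain ⟨w, hw, hw0, rfl, -⟩ := sector_param hν hz harg
  intro h0
  have hrep := mlKernel_representation hν hν2 hν1 h1 h2 h3 h4 hw hw0
  rw [h0, mul_zero, eq_comm, sub_eq_zero] at hrep
  have hn := congrArg norm hrep
  rw [norm_exp_div w hν] at hn
  rcases hw.lt_or_eq with hx | hx
  · have hle := kernel_transform_norm_le (fun x => (hκ0 x).le) w
    have hreal := representation_real hν hν2 hν1 h1 h2 h3 h4 hx
    have hge := ml_real_ge hν hμ (Real.rpow_nonneg hx.le ν)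
    have hG : 0 < 1 / Real.Gamma μ := by
      have := Real.Gamma_pos_of_pos hμ
      positivity
    have := mul_pos (Real.rpow_pos_of_pos hx (μ - 1)) (hG.trans_le hge)
    linarith
  · have hlt := kernel_transform_lt hκ hκ0 hint hx.symm hw0
    rw [← hx, Real.exp_zero] at hn
    have : (0 : ℝ) ≤ if μ = 1 then 1 else 0 := by split_ifs <;> norm_num
    linarith

/-- The boundary case `μ = 1 + ν`, where `z E_{ν,1+ν}(z) = E_{ν,1}(z) - 1`. -/
lemma ml_ne_zero_edge {ν : ℝ} (hν : 0 < ν) (hν1 : ν < 1) {z : ℂ}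
    (harg : |z.arg| ≤ Real.pi * ν / 2) : mittagLeffler ν (1 + ν) z ≠ 0 := by
  have hκ := mlKernel_continuous hν (by linarith) hν1.ne 1
  have hκ0 := fun x => mlKernel_pos hν (by linarith) hν1.ne le_rfl one_le_two hν1.le
    (by linarith) x
  obtain ⟨hint, hmass⟩ := mlKernel_integrable hν (by linarith) hν1.ne le_rfl one_le_two hν1.le
    (by linarith)
  rw [if_pos rfl] at hmass
  rcases eq_or_ne z 0 with rfl | hz
  · exact ml_zero_ne hν (by linarith)
  obtain ⟨w, hw, hw0, rfl, -⟩ := sector_param hν hz harg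
  intro h0
  have hshift := ml_shift hν one_pos (w ^ (ν : ℂ))
  rw [h0, mul_zero, add_zero, Real.Gamma_one] at hshift
  have hrep := mlKernel_representation hν (by linarith) hν1.ne le_rfl one_le_two hν1.le
    (by linarith) hw hw0
  rw [hshift] at hrep
  simp only [sub_self, Complex.ofReal_zero, Complex.cpow_zero, Complex.ofReal_one, div_one,
    mul_one] at hrep
  have hn := congrArg norm (eq_add_of_sub_eq hrep.symm)
  rw [norm_exp_div w hν] at hn
  have htri := norm_add_le (1 : ℂ)
    (∫ x, (mlKernel ν 1 x : ℂ) * Complex.exp (-w * Real.exp x))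
  rw [norm_one] at htri
  rcases hw.lt_or_eq with hx | hx
  · have hle := kernel_transform_norm_le (fun x => (hκ0 x).le) w
    have hreal := representation_real hν (by linarith) hν1.ne le_rfl one_le_two hν1.le
      (by linarith) hx
    have hr : 0 < w.re ^ ν := Real.rpow_pos_of_pos hx ν
    have hge := ml_real_ge hν (show 0 < 1 + ν by linarith) hr.le
    have hG : 0 < 1 / Real.Gamma (1 + ν) := by
      have := Real.Gamma_pos_of_pos (show 0 < 1 + ν by linarith)
      positivity
    have hsh := ml_shift hν one_pos ((w.re ^ ν : ℝ) : ℂ)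
    rw [ml_ofReal, ml_ofReal, Real.Gamma_one] at hsh
    have hsh' : ∑' n : ℕ, (w.re ^ ν) ^ n / Real.Gamma (1 + ν * n) =
        1 + w.re ^ ν * ∑' n : ℕ, (w.re ^ ν) ^ n / Real.Gamma (1 + ν + ν * n) := by
      have := congrArg Complex.re hsh
      simpa only [Complex.ofReal_re, Complex.add_re, Complex.re_ofReal_mul, Complex.ofReal_one,
        div_one, Complex.one_re] using this
    rw [sub_self, Real.rpow_zero, one_mul, hsh'] at hreal
    have := mul_pos hr (hG.trans_le hge)
    linarith
  · have hlt := kernel_transform_lt hκ hκ0 hint hx.symm hw0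
    rw [← hx, Real.exp_zero] at hn
    linarith

/-- A lower bound for `E_{ν,μ}` at infinity in the sector, with `‖z‖^{1/ν} = ‖w‖` when `z = w^ν`. -/
lemma ml_sector_bounds {ν μ : ℝ} (hν : 0 < ν) (hν2 : ν < 2) (hν1 : ν ≠ 1) (h1 : 1 ≤ μ)
    (h2 : μ ≤ 2) (h3 : ν ≤ μ) (h4 : μ < 1 + ν) :
    ∃ c > 0, ∀ z : ℂ, |z.arg| ≤ Real.pi * ν / 2 → 4 ≤ ‖z‖ ^ (1 / ν) →
      c ≤ (‖z‖ ^ (1 / ν)) ^ (μ - 1) * ‖mittagLeffler ν μ z‖ := by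
  have hκ := mlKernel_continuous hν hν2 hν1 μ
  have hκ0 := fun x => mlKernel_pos hν hν2 hν1 h1 h2 h3 h4 x
  obtain ⟨hint, hmass⟩ := mlKernel_integrable hν hν2 hν1 h1 h2 h3 h4
  obtain ⟨c, hc, hgap⟩ := kernel_transform_gap_large hκ hκ0 hint
  refine ⟨c, hc, fun z harg hz4 => ?_⟩
  have hz : z ≠ 0 := by
    rintro rfl
    rw [norm_zero, Real.zero_rpow (by positivity)] at hz4
    norm_num at hz4
  obtain ⟨w, hw, hw0, hwz, hwn⟩ := sector_param hν hz harg
  have hrep := congrArg norm (mlKernel_representation hν hν2 hν1 h1 h2 h3 h4 hw hw0)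
  rw [norm_mul, hwz, Complex.norm_cpow_real, hwn] at hrep
  rw [hrep]
  have htri := norm_sub_norm_le (Complex.exp w / ν)
    (∫ x, (mlKernel ν μ x : ℂ) * Complex.exp (-w * Real.exp x))
  rw [norm_exp_div w hν] at htri
  have hg := hgap w hw (by rw [hwn]; exact hz4)
  have he : 1 / ν ≤ Real.exp w.re / ν := by gcongr; exact Real.one_le_exp hw
  have : (0 : ℝ) ≤ if μ = 1 then 1 else 0 := by split_ifs <;> norm_num
  linarith

/-- An upper bound of order `1/ν` on the whole plane: the coefficients are positive, so it is enough
to bound `E_{ν,μ}` on the positive axis. -/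
lemma ml_upper {ν μ : ℝ} (hν : 0 < ν) (hν2 : ν < 2) (hν1 : ν ≠ 1) (h1 : 1 ≤ μ)
    (h2 : μ ≤ 2) (h3 : ν ≤ μ) (h4 : μ < 1 + ν) {z : ℂ} (hz : z ≠ 0) :
    (‖z‖ ^ (1 / ν)) ^ (μ - 1) * ‖mittagLeffler ν μ z‖ ≤ Real.exp (‖z‖ ^ (1 / ν)) / ν := by
  have hn := norm_pos_iff.mpr hz
  have ht : 0 < ‖z‖ ^ (1 / ν) := Real.rpow_pos_of_pos hn _
  have hreal := representation_real hν hν2 hν1 h1 h2 h3 h4 ht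
  have hpow : (‖z‖ ^ (1 / ν)) ^ ν = ‖z‖ := by
    rw [← Real.rpow_mul hn.le, one_div_mul_cancel hν.ne', Real.rpow_one]
  rw [hpow] at hreal
  have hle := ml_norm_le hν (show 0 < μ by linarith) z
  have hI : 0 ≤ ∫ x, mlKernel ν μ x * Real.exp (-(‖z‖ ^ (1 / ν)) * Real.exp x) :=
    integral_nonneg fun x =>
      mul_nonneg (mlKernel_pos hν hν2 hν1 h1 h2 h3 h4 x).le (Real.exp_pos _).le
  have := mul_le_mul_of_nonneg_left hle (Real.rpow_nonneg ht.le (μ - 1))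
  linarith

/-! ### Complex-analytic tools -/

/-- A boundary version of the maximum principle: if `T 0 = 1` and `‖T‖ ≤ 1` on a half-disc
`Re η ≥ 0` around `0`, and `T' 0` is real and nonnegative, then `T` is constant. Otherwise
`T - 1` behaves like `a ηⁿ`, and some direction `u` in the half-plane makes `a uⁿ` positive. -/
lemma eventually_eq_one_of_half_disc {T : ℂ → ℂ} {τ : ℝ} (hT : AnalyticAt ℂ T 0) (h1 : T 0 = 1)
    (hb : ∀ᶠ η in 𝓝 (0 : ℂ), 0 ≤ η.re → ‖T η‖ ≤ 1) (hd : HasDerivAt T τ 0) (hτ : 0 ≤ τ) :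
    ∀ᶠ η in 𝓝 (0 : ℂ), T η = 1 := by
  by_contra hne
  have hT1 : AnalyticAt ℂ (fun η => T η - 1) 0 := hT.sub analyticAt_const
  obtain ⟨n, g, hg, hg0, hfg⟩ := hT1.exists_eventuallyEq_pow_smul_nonzero_iff.mpr (by
    simpa only [sub_eq_zero] using hne)
  simp only [sub_zero, smul_eq_mul] at hfg
  have hn0 : n ≠ 0 := by
    rintro rfl
    have := hfg.self_of_nhds
    rw [h1, sub_self, pow_zero, one_mul] at this
    exact hg0 this.symm
  have harg : |(g 0).arg / n| ≤ Real.pi / 2 := by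
    rcases Nat.lt_or_ge 1 n with h | h
    · have h2 : (2 : ℝ) ≤ n := by exact_mod_cast h
      rw [abs_div, Nat.abs_cast, div_le_iff₀ (by linarith)]
      have := Complex.abs_arg_le_pi (g 0)
      have := Real.pi_pos
      nlinarith
    · obtain rfl : n = 1 := by omega
      have e1 : HasDerivAt (fun η => T η - 1) (g 0) 0 := by
        have : HasDerivAt (fun η : ℂ => η ^ 1 * g η) (g 0) 0 := by
          have := (hasDerivAt_pow 1 (0 : ℂ)).fun_mul hg.differentiableAt.hasDerivAt
          simpa using this
        exact this.congr_of_eventuallyEq hfg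
      have e2 : g 0 = τ := e1.unique (hd.sub_const 1)
      rw [e2, Complex.arg_ofReal_of_nonneg hτ]
      simpa using Real.pi_div_two_pos.le
  set α : ℝ := -((g 0).arg / n) with hα
  set u : ℂ := Complex.exp (α * Complex.I) with hu
  have hure : 0 ≤ u.re := by
    rw [hu, Complex.exp_ofReal_mul_I_re]
    obtain ⟨l1, l2⟩ := abs_le.mp harg
    exact Real.cos_nonneg_of_neg_pi_div_two_le_of_le (by linarith) (by linarith)
  have hun : u ^ n * g 0 = (‖g 0‖ : ℂ) := by
    have hnc : (n : ℂ) ≠ 0 := by exact_mod_cast hn0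
    conv_lhs => rw [← Complex.norm_mul_exp_arg_mul_I (g 0)]
    rw [hu, ← Complex.exp_nat_mul, mul_left_comm, ← Complex.exp_add, hα]
    push_cast
    rw [show (n : ℂ) * (-((g 0).arg / n) * Complex.I) + (g 0).arg * Complex.I = 0 by
      field_simp; ring, Complex.exp_zero, mul_one]
  have hpath : Tendsto (fun r : ℝ => (r : ℂ) * u) (𝓝[>] 0) (𝓝 0) := by
    have : Continuous fun r : ℝ => (r : ℂ) * u := by fun_prop
    simpa using (this.tendsto 0).mono_left nhdsWithin_le_nhds
  have hpos : ∀ᶠ r : ℝ in 𝓝[>] 0, 0 < (u ^ n * g (r * u)).re := by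
    have hc : Tendsto (fun r : ℝ => (u ^ n * g (r * u)).re) (𝓝[>] 0) (𝓝 ‖g 0‖) := by
      have h2 := (hg.continuousAt.tendsto.comp hpath).const_mul (u ^ n)
      rw [hun] at h2
      simpa [Function.comp_def] using (Complex.continuous_re.tendsto _).comp h2
    exact hc.eventually (lt_mem_nhds (norm_pos_iff.mpr hg0))
  obtain ⟨r, ⟨⟨hr1, hr2⟩, hr3⟩, hr⟩ := (((hpath.eventually hb).and (hpath.eventually hfg)).and hpos
    |>.and self_mem_nhdsWithin).exists
  have hr0 : 0 < r := hr
  have hle := hr1 (by rw [Complex.re_ofReal_mul]; positivity)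
  have hT' : T (r * u) = 1 + ((r ^ n : ℝ) : ℂ) * (u ^ n * g (r * u)) := by
    push_cast
    rw [← mul_assoc, ← mul_pow, ← hr2]; ring
  have hre := (Complex.re_le_norm (T (r * u))).trans hle
  rw [hT', Complex.add_re, Complex.one_re, Complex.re_ofReal_mul] at hre
  have := mul_pos (pow_pos hr0 n) hr3
  linarith

/-- Phragmén–Lindelöf in the right half-plane for functions of subexponential growth. -/
lemma norm_le_one_of_subexponential {Q : ℂ → ℂ} (hd : DiffContOnCl ℂ Q {z | 0 < z.re})
    (hgrow : ∀ δ > 0, ∀ᶠ r : ℝ in atTop, ∀ η : ℂ, 0 ≤ η.re → ‖η‖ = r →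
      ‖Q η‖ ≤ Real.exp (δ * r))
    (him : ∀ y : ℝ, ‖Q (y * Complex.I)‖ ≤ 1) {η : ℂ} (hη : 0 ≤ η.re) : ‖Q η‖ ≤ 1 := by
  have key : ∀ ε > (0 : ℝ), ‖Q η * Complex.exp (-ε * η)‖ ≤ 1 := by
    intro ε hε
    have hn (z : ℂ) : ‖Complex.exp (-ε * z)‖ = Real.exp (-(ε * z.re)) := by
      rw [Complex.norm_exp]; simp
    refine PhragmenLindelof.right_half_plane_of_tendsto_zero_on_real
      (f := fun η => Q η * Complex.exp (-ε * η)) ?_ ⟨1, one_lt_two, 1, ?_⟩ ?_ (fun y => ?_) hη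
    · exact hd.smul (by fun_prop : Differentiable ℂ fun z : ℂ => Complex.exp (-ε * z)).diffContOnCl
    · refine Asymptotics.IsBigO.of_bound 1 ?_
      have h1 := (tendsto_norm_cobounded_atTop (E := ℂ)).eventually (hgrow 1 one_pos)
      refine Filter.eventually_inf_principal.mpr ?_
      filter_upwards [h1] with z hz hz0
      have hz0 : 0 < z.re := hz0
      rw [norm_mul, hn, Real.rpow_one, Real.norm_eq_abs, abs_of_pos (Real.exp_pos _), one_mul]
      refine (mul_le_of_le_one_right (norm_nonneg _) ?_).trans (hz z hz0.le rfl)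
      rw [Real.exp_le_one_iff]
      have := mul_pos hε hz0
      linarith
    · refine squeeze_zero_norm' (a := fun x : ℝ => Real.exp (-(ε / 2 * x))) ?_ ?_
      · filter_upwards [hgrow (ε / 2) (by positivity), eventually_ge_atTop 0] with x hx hx0
        rw [norm_mul, hn, Complex.ofReal_re]
        refine (mul_le_mul_of_nonneg_right (hx x (by simpa using hx0) (by simp [abs_of_nonneg hx0]))
          (Real.exp_pos _).le).trans_eq ?_
        rw [← Real.exp_add]; congr 1; ring
      · exact Real.tendsto_exp_neg_atTop_nhds_zero.comp
          (tendsto_id.const_mul_atTop (by positivity : 0 < ε / 2))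
    · rw [norm_mul, hn]
      simpa using him y
  have hlim : Tendsto (fun ε : ℝ => ‖Q η * Complex.exp (-ε * η)‖) (𝓝[>] 0) (𝓝 ‖Q η‖) := by
    have : Continuous fun ε : ℝ => ‖Q η * Complex.exp (-ε * η)‖ := by fun_prop
    simpa using (this.tendsto 0).mono_left nhdsWithin_le_nhds
  exact le_of_tendsto hlim (eventually_mem_nhdsWithin.mono key)

/-- The half-plane below the line through `0` in direction `e^{iφ}` lies in the sector of
half-opening `φ` when `π/2 < φ < π`. -/
lemma abs_arg_le_of_halfplane {φ : ℝ} (h1 : Real.pi / 2 < φ) (h2 : φ < Real.pi) {z : ℂ}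
    (hz : (Complex.exp (-(φ * Complex.I)) * z).im ≤ 0) : |z.arg| ≤ φ := by
  rcases eq_or_ne z 0 with rfl | hz0
  · simp; linarith [Real.pi_pos]
  have hn := norm_pos_iff.mpr hz0
  have e : Complex.exp (-(φ * Complex.I)) * z =
      ‖z‖ * Complex.exp (((z.arg - φ : ℝ) : ℂ) * Complex.I) := by
    conv_lhs => rw [← Complex.norm_mul_exp_arg_mul_I z]
    rw [mul_left_comm, ← Complex.exp_add]
    congr 2; push_cast; ring
  rw [e, Complex.im_ofReal_mul, Complex.exp_ofReal_mul_I_im] at hz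
  have hs : Real.sin (z.arg - φ) ≤ 0 := by
    by_contra! h
    have := mul_pos hn h
    linarith
  have ha1 := Complex.neg_pi_lt_arg z
  have ha2 := Complex.arg_le_pi z
  rw [abs_le]
  constructor
  · by_contra! h
    have : 0 < Real.sin (z.arg - φ + 2 * Real.pi) :=
      Real.sin_pos_of_pos_of_lt_pi (by linarith) (by linarith)
    rw [Real.sin_add_two_pi] at this
    linarith
  · by_contra! h
    have : 0 < Real.sin (z.arg - φ) := Real.sin_pos_of_pos_of_lt_pi (by linarith) (by linarith)
    linarith

/-! ### The range `1 < ν < 2`, `ν - 1 ≤ μ ≤ 1` -/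

/-- On a half-plane contained in the sector, the quotient of `F = E_{ν,μ}` along a reflected line
by `F` has subexponential growth: `F` has order `1/ν < 1`, and is bounded below in the sector. -/
lemma ml_quotient_growth {ν μ : ℝ} (hν : 1 < ν) (hν2 : ν < 2) (h1 : 1 ≤ μ) (h2 : μ ≤ 2)
    (h3 : ν ≤ μ) (h4 : μ < 1 + ν) {z₀ d : ℂ} (hd : ‖d‖ = 1)
    (harg : ∀ η : ℂ, 0 ≤ η.re → |(z₀ + d * η).arg| ≤ Real.pi * ν / 2) {δ : ℝ} (hδ : 0 < δ) :
    ∀ᶠ r : ℝ in atTop, ∀ η : ℂ, 0 ≤ η.re → ‖η‖ = r →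
      ‖mittagLeffler ν μ ((starRingEnd ℂ) z₀ - (starRingEnd ℂ) d * η) /
        mittagLeffler ν μ (z₀ + d * η)‖ ≤ Real.exp (δ * r) := by
  have hν0 : 0 < ν := by linarith
  have hμ0 : 0 < μ := by linarith
  obtain ⟨c, hc, hlow⟩ := ml_sector_bounds hν0 hν2 hν.ne' h1 h2 h3 h4
  have hp0 : 0 < 1 / ν := by positivity
  have hp1 : 1 / ν < 1 := by rw [div_lt_one hν0]; exact hν
  have t1 : Tendsto (fun r : ℝ => (r / 2) ^ (1 / ν)) atTop atTop :=
    (tendsto_rpow_atTop hp0).comp (tendsto_id.atTop_div_const two_pos)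
  have t2 : ∀ᶠ r : ℝ in atTop, (2 * r) ^ (1 / ν) ≤ δ / 2 * r := by
    have h := ((tendsto_rpow_neg_atTop (sub_pos.mpr hp1)).comp
      (tendsto_id.const_mul_atTop (two_pos : (0 : ℝ) < 2))).eventually
      (eventually_le_nhds (show 0 < δ / 4 by positivity))
    filter_upwards [h, eventually_gt_atTop 0] with r hr hr0
    simp only [Function.comp_def, id_eq] at hr
    calc (2 * r) ^ (1 / ν) = (2 * r) ^ (-(1 - 1 / ν)) * (2 * r) := by
          rw [← Real.rpow_add_one (by positivity)]; congr 1; ring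
      _ ≤ δ / 4 * (2 * r) := by gcongr
      _ = δ / 2 * r := by ring
  have t3 : ∀ᶠ r : ℝ in atTop, 2 * r / (c * ν) ≤ Real.exp (δ / 2 * r) := by
    have h := (isLittleO_pow_exp_pos_mul_atTop 1 (show 0 < δ / 2 by positivity)).bound
      (show 0 < c * ν / 2 by positivity)
    filter_upwards [h, eventually_ge_atTop 0] with r hr hr0
    rw [pow_one, Real.norm_eq_abs, Real.norm_eq_abs, abs_of_nonneg hr0, Real.abs_exp] at hr
    rw [div_le_iff₀ (by positivity)]
    linarith
  filter_upwards [t1.eventually_ge_atTop 4, t2, t3, eventually_ge_atTop 1,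
    eventually_ge_atTop (2 * ‖z₀‖)] with r hr1 hr2 hr3 hr4 hr5 η hη hηr
  have hd' : ‖d * η‖ = r := by rw [norm_mul, hd, one_mul, hηr]
  have hnum : ‖mittagLeffler ν μ ((starRingEnd ℂ) z₀ - (starRingEnd ℂ) d * η)‖ ≤
      Real.exp ((2 * r) ^ (1 / ν)) / ν := by
    set w := (starRingEnd ℂ) z₀ - (starRingEnd ℂ) d * η with hw
    have hwn : ‖w‖ ≤ 2 * r := by
      refine (norm_sub_le _ _).trans ?_
      rw [norm_mul, RCLike.norm_conj, RCLike.norm_conj, hd, one_mul, hηr]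
      linarith [norm_nonneg z₀]
    have hup := ml_upper hν0 hν2 hν.ne' h1 h2 h3 h4
      (z := ((2 * r : ℝ) : ℂ)) (by exact_mod_cast (by linarith : 2 * r ≠ 0))
    rw [ml_ofReal, Complex.norm_real, Complex.norm_real, Real.norm_of_nonneg (by linarith)] at hup
    have hone : 1 ≤ ((2 * r) ^ (1 / ν)) ^ (μ - 1) :=
      Real.one_le_rpow (Real.one_le_rpow (by linarith) hp0.le) (by linarith)
    have hsum := (ml_norm_le hν0 hμ0 w).trans
      ((ml_summable hν0 hμ0 (norm_nonneg w)).tsum_le_tsum (fun n => by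
        have := ml_gamma_pos hν0 hμ0 n
        gcongr) (ml_summable hν0 hμ0 (by linarith : 0 ≤ 2 * r)))
    refine (hsum.trans (le_abs_self _)).trans (le_trans ?_ hup)
    exact le_mul_of_one_le_left (abs_nonneg _) hone
  have hden : c / (2 * r) ≤ ‖mittagLeffler ν μ (z₀ + d * η)‖ := by
    set w := z₀ + d * η with hw
    have hwu : ‖w‖ ≤ 2 * r := by
      refine (norm_add_le _ _).trans ?_
      rw [hd']; linarith [norm_nonneg z₀]
    have hwl : r / 2 ≤ ‖w‖ := by
      have := norm_sub_le w z₀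
      rw [hw, add_sub_cancel_left, hd', ← hw] at this
      linarith
    have hx4 : 4 ≤ ‖w‖ ^ (1 / ν) :=
      hr1.trans (Real.rpow_le_rpow (by linarith) hwl hp0.le)
    have hl := hlow w (harg η hη) hx4
    have hw1 : 1 ≤ ‖w‖ := by
      by_contra! hlt
      have := Real.rpow_le_one (norm_nonneg w) hlt.le hp0.le
      linarith
    have hx : (‖w‖ ^ (1 / ν)) ^ (μ - 1) ≤ 2 * r := by
      calc (‖w‖ ^ (1 / ν)) ^ (μ - 1) ≤ (‖w‖ ^ (1 / ν)) ^ (1 : ℝ) :=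
            Real.rpow_le_rpow_of_exponent_le (by linarith) (by linarith)
        _ = ‖w‖ ^ (1 / ν) := Real.rpow_one _
        _ ≤ ‖w‖ ^ (1 : ℝ) := Real.rpow_le_rpow_of_exponent_le hw1 hp1.le
        _ = ‖w‖ := Real.rpow_one _
        _ ≤ 2 * r := hwu
    rw [div_le_iff₀ (by linarith), mul_comm]
    exact hl.trans (mul_le_mul_of_nonneg_right hx (norm_nonneg _))
  have hcr : 0 < c / (2 * r) := by positivity
  rw [norm_div]
  calc _ ≤ Real.exp ((2 * r) ^ (1 / ν)) / ν / (c / (2 * r)) := by gcongr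
    _ = 2 * r / (c * ν) * Real.exp ((2 * r) ^ (1 / ν)) := by field_simp
    _ ≤ Real.exp (δ / 2 * r) * Real.exp (δ / 2 * r) := by gcongr
    _ = Real.exp (δ * r) := by rw [← Real.exp_add]; congr 1; ring

/-- The zero-free property in the closed upper half of the sector. At a zero `z₀ ≠ 0` of `E_{ν,μ}`
the logarithmic derivative of `F = E_{ν,μ+1}` is `-μ/(ν z₀)`. The reflection quotient of `F` about
the line through `z₀` parallel to the upper edge of the sector is bounded by `1` on the side inside
the sector, has modulus `1` on that line, and has real nonnegative logarithmic derivative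
`2μ sin (φ - arg z₀) / (ν ‖z₀‖)` at `z₀`; hence it is constant. So `z₀` lies on the edge and `F` is
symmetric about the edge, which contradicts `F' 0 ≠ 0`. -/
lemma ml_ne_zero_of_le_one_of_arg_nonneg {ν μ : ℝ} (hν : 1 < ν) (hν2 : ν < 2) (h1 : ν - 1 ≤ μ)
    (h2 : μ ≤ 1) {z₀ : ℂ} (harg : z₀.arg ≤ Real.pi * ν / 2) (harg0 : 0 ≤ z₀.arg) :
    mittagLeffler ν μ z₀ ≠ 0 := by
  have hν0 : 0 < ν := by linarith
  have hμ0 : 0 < μ := by linarith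
  have hσ0 : 0 < μ + 1 := by linarith
  rcases eq_or_ne z₀ 0 with rfl | hz
  · exact ml_zero_ne hν0 hμ0
  intro hE
  have hpi := Real.pi_pos
  set φ : ℝ := Real.pi * ν / 2 with hφ
  have hφ1 : Real.pi / 2 < φ := by rw [hφ]; nlinarith
  have hφ2 : φ < Real.pi := by rw [hφ]; nlinarith
  set F : ℂ → ℂ := mittagLeffler ν (μ + 1) with hF
  have hFd : Differentiable ℂ F := ml_differentiable hν0 hσ0
  have hconj (z : ℂ) : F ((starRingEnd ℂ) z) = (starRingEnd ℂ) (F z) := ml_conj _ _ z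
  set d : ℂ := -Complex.I * Complex.exp (φ * Complex.I) with hd
  have hdn : ‖d‖ = 1 := by rw [hd, norm_mul, Complex.norm_exp_ofReal_mul_I]; simp
  have hdre : d.re = Real.sin φ := by
    rw [hd, neg_mul, Complex.neg_re, Complex.I_mul_re, Complex.exp_ofReal_mul_I_im]; ring
  have hzn : 0 < ‖z₀‖ := norm_pos_iff.mpr hz
  set z' : ℂ := (starRingEnd ℂ) z₀ with hz'
  set d' : ℂ := (starRingEnd ℂ) d with hd'
  have hz'0 : z' ≠ 0 := by rw [hz']; simpa using hz
  -- the half-plane `z₀ + d η`, `Re η ≥ 0`, is contained in the sector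
  have hsec (η : ℂ) (hη : 0 ≤ η.re) : |(z₀ + d * η).arg| ≤ φ := by
    refine abs_arg_le_of_halfplane hφ1 hφ2 ?_
    have e : Complex.exp (-(φ * Complex.I)) * (z₀ + d * η) =
        ‖z₀‖ * Complex.exp (((z₀.arg - φ : ℝ) : ℂ) * Complex.I) - Complex.I * η := by
      have e1 : Complex.exp (-(φ * Complex.I)) * z₀ =
          ‖z₀‖ * Complex.exp (((z₀.arg - φ : ℝ) : ℂ) * Complex.I) := by
        conv_lhs => rw [← Complex.norm_mul_exp_arg_mul_I z₀]
        rw [mul_left_comm, ← Complex.exp_add]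
        congr 2; push_cast; ring
      have e2 : Complex.exp (-(φ * Complex.I)) * Complex.exp (φ * Complex.I) = 1 := by
        rw [← Complex.exp_add, neg_add_cancel, Complex.exp_zero]
      rw [mul_add, e1, hd]
      linear_combination (-Complex.I * η) * e2
    rw [e, Complex.sub_im, Complex.im_ofReal_mul, Complex.exp_ofReal_mul_I_im, Complex.I_mul_im]
    have : Real.sin (z₀.arg - φ) ≤ 0 :=
      Real.sin_nonpos_of_nonpos_of_neg_pi_le (by linarith) (by linarith)
    have := mul_nonpos_of_nonneg_of_nonpos hzn.le this
    linarith
  have hne (z : ℂ) (hzs : |z.arg| ≤ φ) : F z ≠ 0 :=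
    ml_ne_zero_of_lt hν0 hν2 hν.ne' (by linarith) (by linarith) (by linarith) (by linarith) hzs
  have hF0 : F z₀ ≠ 0 := hne z₀ (abs_le.mpr ⟨by linarith, harg⟩)
  have hF0' : F z' ≠ 0 := by rw [hz', hconj]; simpa using hF0
  set N : ℂ → ℂ := fun η => F (z' - d' * η) with hN
  set D : ℂ → ℂ := fun η => F (z₀ + d * η) with hD
  have hNd : Differentiable ℂ N := hFd.comp (by fun_prop)
  have hDd : Differentiable ℂ D := hFd.comp (by fun_prop)
  have hD0 (η : ℂ) (hη : 0 ≤ η.re) : D η ≠ 0 := hne _ (hsec η hη)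
  have hND (y : ℝ) : N (y * Complex.I) = (starRingEnd ℂ) (D (y * Complex.I)) := by
    simp only [hN, hD, ← hconj]
    congr 1
    simp [hz', hd']
    ring
  have hQ (η : ℂ) (hη : 0 ≤ η.re) : ‖N η / D η‖ ≤ 1 := by
    refine norm_le_one_of_subexponential (Q := fun η => N η / D η) ?_ ?_ (fun y => ?_) hη
    · refine DifferentiableOn.diffContOnCl fun η hη => ?_
      rw [Complex.closure_setOfPred_lt_re] at hη
      exact ((hNd η).div (hDd η) (hD0 η hη)).differentiableWithinAt
    · intro δ hδ
      exact ml_quotient_growth hν hν2 (by linarith) (by linarith) (by linarith) (by linarith)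
        hdn hsec hδ
    · rw [norm_div, hND, RCLike.norm_conj]
      exact div_self_le_one _
  -- the logarithmic derivative of `F` at a zero of `E_{ν,μ}`
  have hlog (z : ℂ) (h0 : mittagLeffler ν μ z = 0) (hz : z ≠ 0) :
      HasDerivAt F (-(μ * F z / (ν * z))) z := by
    have h := ml_eq_deriv hν0 hμ0 z
    rw [h0, ← hF] at h
    have hνc : (ν : ℂ) ≠ 0 := by exact_mod_cast hν0.ne'
    have e : deriv F z = -(μ * F z / (ν * z)) := by
      field_simp
      linear_combination -h
    rw [← e]
    exact (hFd z).hasDerivAt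
  have hE' : mittagLeffler ν μ z' = 0 := by rw [hz', ml_conj, hE, map_zero]
  set τ : ℝ := 2 * μ * Real.sin (φ - z₀.arg) / (ν * ‖z₀‖) with hτ
  have hsin : 0 ≤ Real.sin (φ - z₀.arg) :=
    Real.sin_nonneg_of_nonneg_of_le_pi (by linarith) (by linarith)
  have hτ0 : 0 ≤ τ := by positivity
  have hdz : d / z₀ + d' / z' = ((2 * (Real.sin (φ - z₀.arg) / ‖z₀‖) : ℝ) : ℂ) := by
    have e1 : d / z₀ = ((‖z₀‖⁻¹ : ℝ) : ℂ) *
        (-Complex.I * Complex.exp (((φ - z₀.arg : ℝ) : ℂ) * Complex.I)) := by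
      conv_lhs => rw [← Complex.norm_mul_exp_arg_mul_I z₀]
      rw [hd, Complex.ofReal_sub, sub_mul, Complex.exp_sub]
      push_cast
      field_simp
    have e2 : (d / z₀).re = Real.sin (φ - z₀.arg) / ‖z₀‖ := by
      rw [e1, Complex.re_ofReal_mul, neg_mul, Complex.neg_re, Complex.I_mul_re,
        Complex.exp_ofReal_mul_I_im]
      ring
    rw [hz', hd', ← map_div₀, Complex.add_conj, e2]
  set T : ℂ → ℂ := fun η => F z₀ / F z' * (N η / D η) with hT
  have hN0 : N 0 = F z' := by simp [hN]
  have hD00 : D 0 = F z₀ := by simp [hD]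
  have hT1 : T 0 = 1 := by
    simp only [hT, hN0, hD00]; field_simp
  have hTd : HasDerivAt T τ 0 := by
    have i1 : HasDerivAt (fun η : ℂ => z' - d' * η) (-(d' * 1)) 0 :=
      ((hasDerivAt_id 0).const_mul d').const_sub z'
    have i2 : HasDerivAt (fun η : ℂ => z₀ + d * η) (d * 1) 0 :=
      ((hasDerivAt_id 0).const_mul d).const_add z₀
    have k1 := HasDerivAt.comp (h₂ := F) 0 (by simpa using hlog z' hE' hz'0) i1
    have k2 := HasDerivAt.comp (h₂ := F) 0 (by simpa using hlog z₀ hE hz) i2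
    have k := (k1.div k2 (by simpa [Function.comp_def] using hF0)).const_mul (F z₀ / F z')
    refine k.congr_deriv ?_
    have hνc : (ν : ℂ) ≠ 0 := by exact_mod_cast hν0.ne'
    have e3 : (τ : ℂ) = μ / ν * (d / z₀ + d' / z') := by
      rw [hdz, hτ]; push_cast; ring
    rw [e3]
    simp only [Function.comp_apply, mul_zero, sub_zero, add_zero, mul_one]
    field_simp
    ring
  have hTa : AnalyticAt ℂ T 0 :=
    analyticAt_const.mul ((hNd.analyticAt 0).div (hDd.analyticAt 0) (hD0 0 le_rfl))
  have hTone := eventually_eq_one_of_half_disc hTa hT1 (Eventually.of_forall fun η hη => by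
    have hn : ‖F z₀ / F z'‖ = 1 := by
      rw [norm_div, hz', hconj, RCLike.norm_conj, div_self (norm_ne_zero_iff.mpr hF0)]
    rw [hT, norm_mul, hn, one_mul]
    exact hQ η hη) hTd hτ0
  have hτz : τ = 0 := by
    have : HasDerivAt T 0 0 := (hasDerivAt_const (0 : ℂ) (1 : ℂ)).congr_of_eventuallyEq hTone
    exact_mod_cast hTd.unique this
  have hsz : Real.sin (φ - z₀.arg) = 0 := by
    rw [hτ, div_eq_zero_iff] at hτz
    rcases hτz with h | h
    · rcases mul_eq_zero.mp h with h | h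
      · linarith
      · exact h
    · have := mul_pos hν0 hzn
      linarith
  have hθ : φ = z₀.arg := by
    by_contra hne'
    have : 0 < Real.sin (φ - z₀.arg) :=
      Real.sin_pos_of_pos_of_lt_pi (sub_pos.mpr (lt_of_le_of_ne harg (Ne.symm hne')))
        (by linarith)
    linarith
  have hglob : (fun η => F z₀ * N η) = fun η => F z' * D η := by
    refine AnalyticOnNhd.eq_of_eventuallyEq (z₀ := 0)
      (fun η _ => (hNd.const_mul _).analyticAt η) (fun η _ => (hDd.const_mul _).analyticAt η) ?_
    filter_upwards [hTone, hDd.continuous.continuousAt.eventually_ne (hD0 0 le_rfl)] with η h h'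
    simp only [hT] at h
    field_simp at h
    exact h
  -- the edge passes through `0`, which corresponds to `η₀ = -i ‖z₀‖`
  set η₀ : ℂ := -Complex.I * ‖z₀‖ with hη₀
  have hp : z₀ + d * η₀ = 0 := by
    have := Complex.norm_mul_exp_arg_mul_I z₀
    rw [← hθ] at this
    rw [hd, hη₀]
    linear_combination (-1 : ℂ) * this + ‖z₀‖ * Complex.exp (φ * Complex.I) * Complex.I_sq
  have hp' : z' - d' * η₀ = 0 := by
    have := congrArg (starRingEnd ℂ) hp
    rw [map_add, map_mul, map_zero] at this
    rw [← this, hη₀]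
    simp
    ring
  have hFF : F z₀ = F z' := by
    have h := congrFun hglob η₀
    simp only [hN, hD, hp, hp'] at h
    exact mul_right_cancel₀ (ml_zero_ne hν0 hσ0) h
  have hsym : N = D := by
    funext η
    have h := congrFun hglob η
    simp only [← hFF] at h
    exact mul_left_cancel₀ hF0 h
  -- `F' 0 = 1 / Γ (μ + 1 + ν)`
  have hF'0 : deriv F 0 ≠ 0 := by
    have hσν : 0 < μ + 1 + ν := by linarith
    have e : F = fun z => ((1 / Real.Gamma (μ + 1) : ℝ) : ℂ) + z * mittagLeffler ν (μ + 1 + ν) z := by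
      funext z
      rw [hF, ml_shift hν0 hσ0 z]
      push_cast; rfl
    have h := ((hasDerivAt_id (0 : ℂ)).mul
      ((ml_differentiable hν0 hσν) 0).hasDerivAt).const_add ((1 / Real.Gamma (μ + 1) : ℝ) : ℂ)
    have h' : HasDerivAt F (mittagLeffler ν (μ + 1 + ν) 0) 0 := by
      rw [e]
      refine h.congr_deriv ?_
      simp
    rw [h'.deriv]
    exact ml_zero_ne hν0 hσν
  have j1 : HasDerivAt N (deriv F 0 * (-(d' * 1))) η₀ :=
    HasDerivAt.comp (h₂ := F) η₀ (by rw [hp']; exact (hFd 0).hasDerivAt)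
      (((hasDerivAt_id η₀).const_mul d').const_sub z')
  have j2 : HasDerivAt D (deriv F 0 * (d * 1)) η₀ :=
    HasDerivAt.comp (h₂ := F) η₀ (by rw [hp]; exact (hFd 0).hasDerivAt)
      (((hasDerivAt_id η₀).const_mul d).const_add z₀)
  rw [hsym] at j1
  have hdd := mul_left_cancel₀ hF'0 (j1.unique j2)
  have hre := congrArg Complex.re hdd
  simp only [mul_one, Complex.neg_re, hd', Complex.conj_re, hdre] at hre
  have : 0 < Real.sin φ := Real.sin_pos_of_pos_of_lt_pi (by linarith) hφ2
  linarith

lemma ml_ne_zero_of_le_one {ν μ : ℝ} (hν : 1 < ν) (hν2 : ν < 2) (h1 : ν - 1 ≤ μ)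
    (h2 : μ ≤ 1) {z : ℂ} (harg : |z.arg| ≤ Real.pi * ν / 2) : mittagLeffler ν μ z ≠ 0 := by
  rcases le_or_gt 0 z.arg with h | h
  · exact ml_ne_zero_of_le_one_of_arg_nonneg hν hν2 h1 h2 ((le_abs_self _).trans harg) h
  · have hpi : z.arg ≠ Real.pi := by
      have := Real.pi_pos
      intro h'
      linarith
    have ha : ((starRingEnd ℂ) z).arg = -z.arg := by rw [Complex.arg_conj, if_neg hpi]
    have := ml_ne_zero_of_le_one_of_arg_nonneg hν hν2 h1 h2 (z₀ := (starRingEnd ℂ) z)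
      (by rw [ha]; exact (neg_le_abs _).trans harg) (by linarith)
    rw [ml_conj] at this
    simpa using this

/-- under the stated conditions on nu and mu, the Mittag-Leffler
function E_{nu, mu} has no zeros in the closed sector |arg z| <= pi nu / 2. -/
theorem statement_15 (ν μ : ℝ)
    (h : (0 < ν ∧ ν < 1 ∧ 1 ≤ μ ∧ μ ≤ 1 + ν) ∨
         (1 < ν ∧ ν < 2 ∧ ((ν - 1 ≤ μ ∧ μ ≤ 1) ∨ (ν ≤ μ ∧ μ ≤ 2)))) :
    ∀ z : ℂ, |z.arg| ≤ Real.pi * ν / 2 → mittagLeffler ν μ z ≠ 0 := by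
  intro z hz
  rcases h with ⟨hν, hν1, h1, h2⟩ | ⟨hν, hν2, ⟨h1, h2⟩ | ⟨h1, h2⟩⟩
  · rcases h2.lt_or_eq with h | rfl
    · exact ml_ne_zero_of_lt hν (by linarith) hν1.ne h1 (by linarith) (by linarith) h hz
    · exact ml_ne_zero_edge hν hν1 hz
  · exact ml_ne_zero_of_le_one hν hν2 h1 h2 hz
  · exact ml_ne_zero_of_lt (by linarith) hν2 hν.ne' (by linarith) h2 h1 (by linarith) hz
end
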